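/- arXiv:2201.00496 — 2 statements merged into one kernel-verified Lean document; each statement's English description precedes it below -/
import Mathlib

section
/- Let D be a non-dictatorial, tops-only, unidimensional domain and fix n ≥ 2. There exists no anonymous and strategy-proof rule f : D^n → A if and only if D is a non-degenerate hybrid domain on the line L^A, i.e., an (a_p, a_q)-hybrid domain on L^A for some indices p < q with 1 < q − p < m − 1. -/
open Classical


/-- A strict preference over `A`, represented as a ranking bijection:
`P k` is the `(k+1)`-th ranked alternative. -/
abbrev Pref (A : Type*) [Fintype A] := Fin (Fintype.card A) ≃ A

variable {A : Type*} [Fintype A] [DecidableEq A] [Nonempty A]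

/-- `rk P k` : the `(k+1)`-th ranked alternative of `P` (0-indexed, so `rk P 0 = r₁(P)`). -/
noncomputable def rk (P : Pref A) (k : ℕ) : A :=
  if h : k < Fintype.card A then P ⟨k, h⟩ else Classical.arbitrary A

/-- The peak `r₁(P)`. -/
noncomputable def peak (P : Pref A) : A := rk P 0

/-- The second-ranked alternative `r₂(P)`. -/
noncomputable def second (P : Pref A) : A := rk P 1

/-- `a` is strictly preferred to `b` under `P`. -/
def prefers (P : Pref A) (a b : A) : Prop := P.symm a < P.symm b

/-- Two preferences are completely reversed. -/
def Reversed (P P' : Pref A) : Prop := ∀ a b : A, prefers P a b ↔ prefers P' b a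

/-- A profile lies in the domain `D`. -/
def InDom (D : Set (Pref A)) {n : ℕ} (P : Fin n → Pref A) : Prop := ∀ i, P i ∈ D

/-- Unanimity (an SCF satisfying it is called a rule). -/
def IsRule (D : Set (Pref A)) {n : ℕ} (f : (Fin n → Pref A) → A) : Prop :=
  ∀ P : Fin n → Pref A, InDom D P → ∀ a : A, (∀ i, peak (P i) = a) → f P = a

/-- Strategy-proofness (relative to the domain `D`). -/
def StrategyProof (D : Set (Pref A)) {n : ℕ} (f : (Fin n → Pref A) → A) : Prop :=
  ∀ P : Fin n → Pref A, InDom D P → ∀ i : Fin n, ∀ Q ∈ D,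
    f P = f (Function.update P i Q) ∨ prefers (P i) (f P) (f (Function.update P i Q))

/-- The tops-only property. -/
def TopsOnly (D : Set (Pref A)) {n : ℕ} (f : (Fin n → Pref A) → A) : Prop :=
  ∀ P P' : Fin n → Pref A, InDom D P → InDom D P' →
    (∀ i, peak (P i) = peak (P' i)) → f P = f P'

/-- Anonymity. -/
def Anonymous (D : Set (Pref A)) {n : ℕ} (f : (Fin n → Pref A) → A) : Prop :=
  ∀ P : Fin n → Pref A, InDom D P → ∀ σ : Equiv.Perm (Fin n), f (P ∘ σ) = f P

/-- `f` behaves like a dictatorship on `B`. -/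
def DictatorOn (D : Set (Pref A)) {n : ℕ} (f : (Fin n → Pref A) → A) (B : Set A) : Prop :=
  ∃ i : Fin n, ∀ P : Fin n → Pref A, InDom D P → (∀ j, peak (P j) ∈ B) → f P = peak (P i)

/-- `f` is a dictatorship. -/
def Dictatorship (D : Set (Pref A)) {n : ℕ} (f : (Fin n → Pref A) → A) : Prop :=
  DictatorOn D f Set.univ

/-- A dictatorial domain. -/
def DictatorialDomain (D : Set (Pref A)) : Prop :=
  ∀ n : ℕ, 2 ≤ n → ∀ f : (Fin n → Pref A) → A,
    IsRule D f → StrategyProof D f → Dictatorship D f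

/-- A tops-only domain. -/
def TopsOnlyDomain (D : Set (Pref A)) : Prop :=
  ∀ n : ℕ, 2 ≤ n → ∀ f : (Fin n → Pref A) → A,
    IsRule D f → StrategyProof D f → TopsOnly D f

/-- Adjacency of two alternatives relative to the domain `D`. -/
def DomAdjacent (D : Set (Pref A)) (a b : A) : Prop :=
  ∃ P ∈ D, ∃ P' ∈ D, peak P = a ∧ second P = b ∧ peak P' = b ∧ second P' = a ∧
    ∀ k : ℕ, 2 ≤ k → rk P k = rk P' k

/-- The adjacency graph `G_∼` of the domain `D`. -/
noncomputable def adjGraph (D : Set (Pref A)) : SimpleGraph A :=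
  SimpleGraph.fromRel (DomAdjacent D)

/-- Path-connectedness of the domain. -/
def PathConnectedDom (D : Set (Pref A)) : Prop := (adjGraph D).Connected

/-- Diversity: the domain contains two completely reversed preferences. -/
def Diversity (D : Set (Pref A)) : Prop := ∃ P ∈ D, ∃ P' ∈ D, Reversed P P'

/-- `S(D^a)`: the set of alternatives second-ranked in some preference of `D` with peak `a`. -/
def secondsSet (D : Set (Pref A)) (a : A) : Set A := {b | ∃ P ∈ D, peak P = a ∧ second P = b}

/-- Leaf symmetry. -/
def LeafSymmetry (D : Set (Pref A)) : Prop :=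
  ∀ x : A, (∃! y, (adjGraph D).Adj x y) →
    (∃ u ∈ secondsSet D x, ∃ v ∈ secondsSet D x, u ≠ v) →
    ∃ z ∈ secondsSet D x, ¬ (adjGraph D).Adj x z ∧ x ∈ secondsSet D z

/-- Unidimensionality: path-connectedness, diversity and leaf symmetry. -/
def Unidimensional (D : Set (Pref A)) : Prop :=
  PathConnectedDom D ∧ Diversity D ∧ LeafSymmetry D

/-- The unique seconds property. -/
def UniqueSeconds (D : Set (Pref A)) : Prop := ∃ x b : A, secondsSet D x = {b}

/-- Minimal richness. -/
def MinimallyRich (D : Set (Pref A)) : Prop := ∀ a : A, ∃ P ∈ D, peak P = a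

/-- The vertex set `⟨x, y|T⟩` of the (in a tree, unique) shortest path between `x` and `y`. -/
def intv (T : SimpleGraph A) (x y : A) : Set A :=
  {z | T.dist x z + T.dist z y = T.dist x y}

/-- `a'` is the projection of `a` onto `B` in `T`. -/
def IsProjPt (T : SimpleGraph A) (B : Set A) (a a' : A) : Prop :=
  a' ∈ B ∧ ∀ b ∈ B, a' ∈ intv T a b

/-- The projection `Proj(a, B)` of `a` onto a path-closed set `B` in the tree `T`. -/
noncomputable def projOn (T : SimpleGraph A) (B : Set A) (a : A) : A :=
  if h : ∃ a', IsProjPt T B a a' then h.choose else a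

/-- `Γ(P)`: the vertex set of the minimal subtree of `T` spanning all the peaks. -/
def gammaSet (T : SimpleGraph A) {n : ℕ} (P : Fin n → Pref A) : Set A :=
  {c | ∃ i j : Fin n, c ∈ intv T (peak (P i)) (peak (P j))}

/-- The projection rule on `T` w.r.t. `xbar`. -/
noncomputable def projRule (T : SimpleGraph A) (xbar : A) {n : ℕ}
    (P : Fin n → Pref A) : A :=
  projOn T (gammaSet T P) xbar

/-- Single-peakedness on a tree. -/
def SinglePeaked (T : SimpleGraph A) (P : Pref A) : Prop :=
  ∀ c d : A, c ≠ d → c ∈ intv T (peak P) d → prefers P c d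

/-- Semi-single-peakedness on `T` w.r.t. the threshold `xbar`. -/
def SemiSP (T : SimpleGraph A) (xbar : A) (P : Pref A) : Prop :=
  (∀ c d : A, c ∈ intv T (peak P) xbar → d ∈ intv T (peak P) xbar → c ≠ d →
    c ∈ intv T (peak P) d → prefers P c d) ∧
  (∀ c : A, c ∉ intv T (peak P) xbar →
    prefers P (projOn T (intv T (peak P) xbar) c) c)

/-- A semi-single-peaked domain. -/
def SemiSPDomain (D : Set (Pref A)) : Prop :=
  ∃ (T : SimpleGraph A) (xbar : A), T.IsTree ∧
    D ⊆ {P | SemiSP T xbar P} ∧ (adjGraph D).Connected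

/-- `A^{a⇀b}`: the alternatives whose path to `b` goes through `a`. -/
def sideSet (T : SimpleGraph A) (a b : A) : Set A := {z | a ∈ intv T z b}

/-- `x = max^P(B)`: `x` is `P`'s best alternative of `B`. -/
def IsBestOf (P : Pref A) (x : A) (B : Set A) : Prop :=
  x ∈ B ∧ ∀ y ∈ B, y ≠ x → prefers P x y

/-- `a` and `b` are dual-thresholds in the tree `T`. -/
def DualThresholds (T : SimpleGraph A) (a b : A) : Prop :=
  a ≠ b ∧ ∀ c : A, c ∉ intv T a b →
    projOn T (intv T a b) c = a ∨ projOn T (intv T a b) c = b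

/-- An `(a,b)`-semi-hybrid preference on `T`. -/
def SemiHybridPref (T : SimpleGraph A) (a b : A) (P : Pref A) : Prop :=
  (peak P ∈ sideSet T a b \ {a} → SemiSP T a P ∧ IsBestOf P b (sideSet T b a)) ∧
  (peak P ∈ sideSet T b a \ {b} → SemiSP T b P ∧ IsBestOf P a (sideSet T a b)) ∧
  (peak P ∈ intv T a b → IsBestOf P a (sideSet T a b) ∧ IsBestOf P b (sideSet T b a))

/-- `x` is a leaf of the subgraph of `G` induced on `B`. -/
def IsLeafOn (G : SimpleGraph A) (B : Set A) (x : A) : Prop :=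
  x ∈ B ∧ ∃! y, y ∈ B ∧ G.Adj x y

/-- `D` is an `(a,b)`-semi-hybrid domain on the tree `T`. -/
def SemiHybridDomainOn (D : Set (Pref A)) (T : SimpleGraph A) (a b : A) : Prop :=
  T.IsTree ∧ DualThresholds T a b ∧ D ⊆ {P | SemiHybridPref T a b P} ∧
  (adjGraph D).Connected ∧
  (¬ ∃ (T' : SimpleGraph A) (a' b' : A), T'.IsTree ∧ DualThresholds T' a' b' ∧
      D ⊆ {P | SemiHybridPref T' a' b' P} ∧ intv T' a' b' ⊂ intv T a b) ∧
  ((adjGraph D).IsTree →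
    ∀ x : A, IsLeafOn (adjGraph D) (intv T a b) x →
      ∃ P ∈ D, ¬ SemiSP (adjGraph D) x P)

/-- `D` is a semi-hybrid domain. -/
def SemiHybridDomain (D : Set (Pref A)) : Prop :=
  ∃ (T : SimpleGraph A) (a b : A), SemiHybridDomainOn D T a b

/-- An `(a,b)`-hybrid preference on `T`. -/
def HybridPref (T : SimpleGraph A) (a b : A) (P : Pref A) : Prop :=
  (∀ y z : A, ((y ∈ sideSet T a b ∧ z ∈ sideSet T a b) ∨
      (y ∈ sideSet T b a ∧ z ∈ sideSet T b a)) → y ≠ z →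
    y ∈ intv T (peak P) z → prefers P y z) ∧
  (peak P ∈ sideSet T a b \ {a} → IsBestOf P a (intv T a b)) ∧
  (peak P ∈ sideSet T b a \ {b} → IsBestOf P b (intv T a b))

/-- `D` is an `(a,b)`-hybrid domain on the tree `T`. -/
def HybridDomainOn (D : Set (Pref A)) (T : SimpleGraph A) (a b : A) : Prop :=
  T.IsTree ∧ DualThresholds T a b ∧ D ⊆ {P | HybridPref T a b P} ∧
  (adjGraph D).Connected ∧
  (¬ ∃ (T' : SimpleGraph A) (a' b' : A), T'.IsTree ∧ DualThresholds T' a' b' ∧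
      D ⊆ {P | HybridPref T' a' b' P} ∧ intv T' a' b' ⊂ intv T a b) ∧
  3 ≤ (intv T a b).ncard

/-- `f` is an `(a,b)`-hybrid rule on the tree `T`. -/
def IsHybridRule (D : Set (Pref A)) {n : ℕ} (f : (Fin n → Pref A) → A)
    (T : SimpleGraph A) (a b : A) : Prop :=
  T.IsTree ∧ DualThresholds T a b ∧ 3 ≤ (intv T a b).ncard ∧
  ∃ i : Fin n, ∀ P : Fin n → Pref A, InDom D P →
    (peak (P i) ∈ intv T a b → f P = peak (P i)) ∧
    (peak (P i) ∈ sideSet T a b \ {a} → f P = projOn T (gammaSet T P) a) ∧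
    (peak (P i) ∈ sideSet T b a \ {b} → f P = projOn T (gammaSet T P) b)

/-- The PNT rule on `T` w.r.t. the edge `(x, y)`, with the two distinguished voters `i, j`. -/
noncomputable def pntRule (T : SimpleGraph A) (x y : A) {n : ℕ} (i j : Fin n)
    (P : Fin n → Pref A) : A :=
  if peak (P i) ∈ sideSet T y x then peak (P i)
  else if peak (P j) ∈ sideSet T x y then projOn T (gammaSet T P) x
  else if prefers (P j) x y then x else y

/-- `(x, y)` is a critical spot in `T` for the domain `D`. -/
def CriticalSpot (D : Set (Pref A)) (T : SimpleGraph A) (x y : A) : Prop :=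
  T.Adj x y ∧
  (∀ P ∈ D, peak P ∈ sideSet T x y → SemiSP T y P) ∧
  (∀ P ∈ D, peak P ∈ sideSet T y x → IsBestOf P x (sideSet T x y)) ∧
  (∃ P ∈ D, ∃ P' ∈ D, peak P = peak P' ∧ peak P ∈ sideSet T y x ∧
    prefers P y x ∧ prefers P' x y)

/-- `x` is a path in the graph `G` (pairwise distinct, consecutive vertices adjacent). -/
def IsPathIn (G : SimpleGraph A) {v : ℕ} (x : Fin v → A) : Prop :=
  Function.Injective x ∧
  ∀ (k : ℕ) (h : k + 1 < v), G.Adj (x ⟨k, Nat.lt_of_succ_lt h⟩) (x ⟨k + 1, h⟩)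

/-- `x` is a cycle in the graph `G`. -/
def IsCycleIn (G : SimpleGraph A) {v : ℕ} (x : Fin v → A) : Prop :=
  Function.Injective x ∧
  (∀ (k : ℕ) (h : k + 1 < v), G.Adj (x ⟨k, Nat.lt_of_succ_lt h⟩) (x ⟨k + 1, h⟩)) ∧
  ∀ (h : 0 < v), G.Adj (x ⟨v - 1, Nat.sub_lt h Nat.one_pos⟩) (x ⟨0, h⟩)

/-- The line `L^A` induced by the ranking of the preference `P`. -/
noncomputable def lineOf (P : Pref A) : SimpleGraph A :=
  SimpleGraph.fromRel (fun a b =>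
    ∃ k : ℕ, k + 1 < Fintype.card A ∧ rk P k = a ∧ rk P (k + 1) = b)

/-- The median of three natural numbers. -/
def med3 (a b c : ℕ) : ℕ := max (min a b) (min (max a b) c)

/-- The two-voter profile in which voter `i` reports `Pi` and the other voter reports `Q`. -/
noncomputable def prof2 (i : Fin 2) (Pi Q : Pref A) : Fin 2 → Pref A :=
  Function.update (fun _ => Q) i Pi


/-!
Let `L` and `U` be the two completely reversed preferences, and let `p` and `q` be maximal such
that all preferences are single-peaked among the first `p + 1` alternatives of `L` and among the
first `q + 1` of `U`. If these two ends leave fewer than three alternatives in the closed zone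
between positions `p` and `q`, choosing the leftmost peak is an anonymous strategy-proof rule.

Otherwise every rule is dictatorial on that zone, so no rule is anonymous. To see this for two
voters, follow a tops-only rule along the edges of the adjacency graph inside the zone. If it does
not always favour the same voter across an edge, it resolves both orders of some edge in favour of
the same endpoint, and pushing this conflict outwards makes it appear at a leaf `w` of the zone,
with neighbour `v`. Were `w` strictly inside the zone, then `v` would be above `w` in both `L` and
`U`: otherwise a two-voter rule that lets one voter choose between `v` and `w` would not be
tops-only. So `w` ends the zone, and the same argument then shows that single-peakedness extends
one step further, contradicting maximality. Option sets and coalitions lift the two-voter statement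
to any number of voters.

Finally, being hybrid on the line with thresholds at the ends of the zone is single-peakedness at
both ends. Minimality of the free zone holds because any tree on which the domain is hybrid is, on
the side of a threshold, again an end of the line, so its free zone contains this one.
-/

namespace SocialChoice

/-! ### Positions in a preference -/

section Positions

variable {α : Type*} [Fintype α]

/-- The 0-indexed position of `a` in the preference `P`, as a natural number. -/
noncomputable def pos (P : Pref α) (a : α) : ℕ := P.symm a

theorem pos_lt_card (P : Pref α) (a : α) : pos P a < Fintype.card α := (P.symm a).2

theorem pos_injective (P : Pref α) : Function.Injective (pos P) :=
  Fin.val_injective.comp P.symm.injective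

theorem prefers_iff {P : Pref α} {a b : α} : prefers P a b ↔ pos P a < pos P b := Iff.rfl

theorem strategyProof_iff {D : Set (Pref α)} {n : ℕ} {f : (Fin n → Pref α) → α} :
    StrategyProof D f ↔ ∀ P, InDom D P → ∀ i, ∀ Q ∈ D,
      pos (P i) (f P) ≤ pos (P i) (f (Function.update P i Q)) := by
  refine forall₅_congr fun P _ i Q _ => ?_
  rw [prefers_iff, le_iff_eq_or_lt, (pos_injective (P i)).eq_iff]

theorem Reversed.symm {P Q : Pref α} (h : Reversed P Q) : Reversed Q P :=
  fun a b => (h b a).symm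

theorem Reversed.pos_add_pos {P Q : Pref α} (h : Reversed P Q) (a : α) :
    pos P a + pos Q a + 1 = Fintype.card α := by
  -- Ranking by `P` and reading the position off the reverse of `Q` is an order automorphism.
  let e : Fin (Fintype.card α) ≃o Fin (Fintype.card α) :=
    { toEquiv := (P.trans Q.symm).trans Fin.revPerm
      map_rel_iff' := by
        intro i j
        have hij := h (P j) (P i)
        simp only [prefers, Equiv.symm_apply_apply] at hij
        simp only [Equiv.trans_apply, Fin.revPerm_apply, Fin.rev_le_rev]
        rw [← not_lt, ← not_lt, hij] }
  have he : e (P.symm a) = P.symm a := by rw [Subsingleton.elim e (OrderIso.refl _)]; rfl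
  have hval : (Fin.rev (Q.symm a) : ℕ) = P.symm a := by
    simpa [e] using congrArg Fin.val he
  have := pos_lt_card Q a
  simp only [Fin.val_rev, pos] at hval this ⊢
  omega

variable [Nonempty α]

theorem pos_rk (P : Pref α) {k : ℕ} (hk : k < Fintype.card α) : pos P (rk P k) = k := by
  simp [pos, rk, hk]

theorem rk_pos (P : Pref α) (a : α) : rk P (pos P a) = a := by
  simp [pos, rk]

theorem pos_peak (P : Pref α) : pos P (peak P) = 0 := pos_rk P Fintype.card_pos

theorem peak_eq_of_pos_eq_zero {P : Pref α} {a : α} (h : pos P a = 0) : peak P = a :=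
  pos_injective P ((pos_peak P).trans h.symm)

end Positions

/-! ### Preferences exchanging two adjacent peaks -/

section Adjacency

variable {α : Type*} [Fintype α] [Nonempty α] {D : Set (Pref α)}

theorem exists_swapped_prefs_of_adj {x y : α} (h : (adjGraph D).Adj x y) :
    ∃ P ∈ D, ∃ Q ∈ D, pos P x = 0 ∧ pos P y = 1 ∧ pos Q y = 0 ∧ pos Q x = 1 ∧
      ∀ c, c ≠ x → c ≠ y → pos P c = pos Q c := by
  have : Nontrivial α := ⟨x, y, h.ne⟩
  have hcard : 1 < Fintype.card α := Fintype.one_lt_card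
  have of_domAdjacent : ∀ x y, DomAdjacent D x y → ∃ P ∈ D, ∃ Q ∈ D, pos P x = 0 ∧
      pos P y = 1 ∧ pos Q y = 0 ∧ pos Q x = 1 ∧ ∀ c, c ≠ x → c ≠ y → pos P c = pos Q c := by
    rintro _ _ ⟨P, hP, Q, hQ, rfl, rfl, hQ0, hQ1, hrk⟩
    refine ⟨P, hP, Q, hQ, pos_peak P, pos_rk P hcard, hQ0 ▸ pos_peak Q, hQ1 ▸ pos_rk Q hcard,
      fun c hc0 hc1 => ?_⟩
    have h0 : pos P c ≠ 0 := fun h0 => hc0 (peak_eq_of_pos_eq_zero h0).symm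
    have h1 : pos P c ≠ 1 := fun h1 => hc1 (pos_injective P (h1.trans (pos_rk P hcard).symm))
    have hc : rk Q (pos P c) = c := (hrk _ (by omega)).symm.trans (rk_pos P c)
    exact (pos_rk Q (pos_lt_card P c)).symm.trans (congrArg (pos Q) hc)
  rw [adjGraph, SimpleGraph.fromRel_adj] at h
  rcases h.2 with h | h
  · exact of_domAdjacent x y h
  · obtain ⟨Q, hQ, P, hP, h0, h1, h2, h3, hpos⟩ := of_domAdjacent y x h
    exact ⟨P, hP, Q, hQ, h2, h3, h0, h1, fun c hx hy => (hpos c hy hx).symm⟩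

theorem minimallyRich_of_pathConnected (hG : PathConnectedDom D) (hD : D.Nonempty) :
    MinimallyRich D := by
  intro a
  obtain ⟨P, hP⟩ := hD
  rcases subsingleton_or_nontrivial α with _ | _
  · exact ⟨P, hP, Subsingleton.elim _ _⟩
  · obtain ⟨b, hab⟩ := hG.preconnected.exists_adj_of_nontrivial a
    obtain ⟨Q, hQ, _, _, h0, _⟩ := exists_swapped_prefs_of_adj hab
    exact ⟨Q, hQ, peak_eq_of_pos_eq_zero h0⟩

/-- `v` is the option function of a single voter in a strategy-proof tops-only rule, the other
reports being fixed: a voter with preference `P` obtains `v (peak P)`, and can do no better by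
reporting another peak `b`. -/
def PeakOptimal (D : Set (Pref α)) (v : α → α) : Prop :=
  ∀ P ∈ D, ∀ b, pos P (v (peak P)) ≤ pos P (v b)

/-- Along every edge of `G`, the map `v` either does not change or takes both endpoints to
themselves. -/
def EdgeLocal {V : Type*} (G : SimpleGraph V) (v : V → V) : Prop :=
  ∀ ⦃x y⦄, G.Adj x y → v x = v y ∨ v x = x ∧ v y = y

theorem PeakOptimal.edgeLocal {v : α → α} (hv : PeakOptimal D v) :
    EdgeLocal (adjGraph D) v := by
  intro x y hxy
  obtain ⟨P, hP, Q, hQ, hPx, hPy, hQy, hQx, hpos⟩ := exists_swapped_prefs_of_adj hxy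
  have hPv := hv P hP y
  have hQv := hv Q hQ x
  rw [peak_eq_of_pos_eq_zero hPx] at hPv
  rw [peak_eq_of_pos_eq_zero hQy] at hQv
  by_cases hst : v x = v y
  · exact Or.inl hst
  have hP_lt : pos P (v x) < pos P (v y) := hPv.lt_of_ne fun e => hst (pos_injective P e)
  have hQ_lt : pos Q (v y) < pos Q (v x) := hQv.lt_of_ne fun e => hst (pos_injective Q e).symm
  have hPy_le : pos P (v y) ≤ 1 := by
    by_contra hlt
    have hy := hpos (v y) (by rintro e; rw [e] at hlt; omega) (by rintro e; rw [e] at hlt; omega)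
    have hx := hpos (v x) (by rintro e; rw [e] at hQ_lt; omega)
      (by rintro e; rw [e] at hQ_lt; omega)
    omega
  exact Or.inr ⟨pos_injective P (by omega), pos_injective P (by omega)⟩

end Adjacency

/-! ### Reachability inside a set of vertices -/

section Restriction

variable {V : Type*} {G H : SimpleGraph V} {S : Set V} {x y : V}

/-- The graph on all of `V` whose edges are the edges of `G` with both endpoints in `S`. -/
def restrictTo (G : SimpleGraph V) (S : Set V) : SimpleGraph V where
  Adj x y := G.Adj x y ∧ x ∈ S ∧ y ∈ S
  symm := ⟨fun _ _ h => ⟨h.1.symm, h.2.2, h.2.1⟩⟩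
  loopless := ⟨fun _ h => h.1.ne rfl⟩

/-- Any two vertices of `S` are joined by a walk of `G` inside `S`. -/
def ConnectedOn (G : SimpleGraph V) (S : Set V) : Prop :=
  ∀ x ∈ S, ∀ y ∈ S, (restrictTo G S).Reachable x y

@[elab_as_elim]
theorem reachable_induction {motive : V → Prop} (h : G.Reachable x y) (hx : motive x)
    (hstep : ∀ u v, G.Adj u v → motive u → motive v) : motive y := by
  rw [SimpleGraph.reachable_iff_reflTransGen] at h
  induction h with
  | refl => exact hx
  | tail _ hadj ih => exact hstep _ _ hadj ih

theorem reachable_apply_of_forall_adj (t : V → V)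
    (ht : ∀ u v, G.Adj u v → H.Reachable (t u) (t v)) (h : G.Reachable x y) :
    H.Reachable (t x) (t y) :=
  reachable_induction h .rfl fun u v huv ih => ih.trans (ht u v huv)

theorem reachable_restrictTo_of_forall_adj {v : V} (hS : ∀ a b, G.Adj a b → a ∈ S → b ∉ S → a = v)
    (h : G.Reachable x y) (hx : x ∈ S) (hy : y ∈ S) : (restrictTo G S).Reachable x y := by
  -- Collapsing the complement of `S` to `v` is a retraction onto `S`.
  let t : V → V := fun a => if a ∈ S then a else v
  have t_mem : ∀ {a}, a ∈ S → t a = a := fun ha => if_pos ha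
  have t_notMem : ∀ {a}, a ∉ S → t a = v := fun ha => if_neg ha
  suffices (restrictTo G S).Reachable (t x) (t y) by rwa [t_mem hx, t_mem hy] at this
  refine reachable_apply_of_forall_adj t (fun a b hab => ?_) h
  by_cases ha : a ∈ S <;> by_cases hb : b ∈ S
  · rw [t_mem ha, t_mem hb]
    exact SimpleGraph.Adj.reachable ⟨hab, ha, hb⟩
  · rw [t_mem ha, t_notMem hb, hS a b hab ha hb]
  · rw [t_notMem ha, t_mem hb, hS b a hab.symm hb ha]
  · rw [t_notMem ha, t_notMem hb]

theorem EdgeLocal.apply_eq_of_reachable {v : V → V} (hv : EdgeLocal G v) {c : V} (hc : c ∉ S)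
    (h : (restrictTo G S).Reachable x y) (hx : v x = c) : v y = c :=
  reachable_induction h hx fun a b hab ha => by
    rcases hv hab.1 with heq | ⟨hfix, _⟩
    · exact heq.symm.trans ha
    · exact absurd ((hfix.symm.trans ha) ▸ hab.2.1) hc

theorem EdgeLocal.apply_mem_of_reachable {v : V → V} (hv : EdgeLocal G v)
    (h : (restrictTo G S).Reachable x y) (hx : v x ∈ S) : v y ∈ S :=
  reachable_induction h hx fun a b hab ha => by
    rcases hv hab.1 with heq | ⟨_, hfix⟩
    · exact heq ▸ ha
    · exact hfix.symm ▸ hab.2.2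

end Restriction

/-! ### Two-voter functions on a graph -/

section EdgeLocalRules

variable {V : Type*} {G : SimpleGraph V} {Z : Set V} {F : V → V → V}

/-- A function of two reported vertices that is edge-local in each report and unanimous on `Z`:
the graph-theoretic shadow of a two-voter strategy-proof tops-only rule. -/
structure EdgeLocalRule (G : SimpleGraph V) (Z : Set V) (F : V → V → V) : Prop where
  left : ∀ y, EdgeLocal G (fun x => F x y)
  right : ∀ x, EdgeLocal G (fun y => F x y)
  unanimous : ∀ x ∈ Z, F x x = x

/-- Both orders of the reports `x`, `y` are resolved in favour of `y`. -/
def Conflict (F : V → V → V) (x y : V) : Prop := F x y = y ∧ F y x = y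

/-- A conflict `w v` along an edge at which `w` is a leaf of the subgraph induced on `Z`. -/
structure LeafConflict (G : SimpleGraph V) (Z : Set V) (F : V → V → V) (w v : V) : Prop where
  adj : (restrictTo G Z).Adj w v
  conflict : Conflict F w v
  leaf : ∀ u, (restrictTo G Z).Adj w u → u = v

/-- The vertices reachable from `x` inside `Z` while avoiding `y`. -/
def branch (G : SimpleGraph V) (Z : Set V) (x y : V) : Set V :=
  {z | (restrictTo G (Z \ {y})).Reachable x z}

namespace EdgeLocalRule

theorem swap (h : EdgeLocalRule G Z F) : EdgeLocalRule G Z (fun x y => F y x) :=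
  ⟨h.right, h.left, h.unanimous⟩

theorem eq_or_eq_of_adj (h : EdgeLocalRule G Z F) {x y : V} (hxy : (restrictTo G Z).Adj x y) :
    F x y = x ∨ F x y = y := by
  rcases h.left y hxy.1 with heq | ⟨hfix, _⟩
  · exact Or.inr (heq.trans (h.unanimous y hxy.2.2))
  · exact Or.inl hfix

theorem eq_left_forward (h : EdgeLocalRule G Z F) {x y z : V} (hxy : (restrictTo G Z).Adj x y)
    (hyz : (restrictTo G Z).Adj y z) (hxz : x ≠ z) (hF : F x y = x) : F y z = y := by
  have hFxz : F x z = x := by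
    rcases h.right x hyz.1 with heq | ⟨hfix, _⟩
    · exact heq.symm.trans hF
    · exact absurd (hF.symm.trans hfix) hxy.ne
  rcases h.left z hxy.1 with heq | ⟨_, hfix⟩
  · have hFyz : F y z = x := heq.symm.trans hFxz
    exact (h.eq_or_eq_of_adj hyz).resolve_right fun e => hxz (hFyz.symm.trans e)
  · exact hfix

theorem conflict_forward (h : EdgeLocalRule G Z F) {x y u : V} (hxy : (restrictTo G Z).Adj x y)
    (hxu : (restrictTo G Z).Adj x u) (huy : u ≠ y) (hF : Conflict F x y) : Conflict F u x :=
  ⟨h.swap.eq_left_forward hxy.symm hxu huy.symm hF.1, h.eq_left_forward hxy.symm hxu huy.symm hF.2⟩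

theorem branch_ssubset (h : EdgeLocalRule G Z F) {x y u : V} (hxy : (restrictTo G Z).Adj x y)
    (hxu : (restrictTo G Z).Adj x u) (huy : u ≠ y) (hF : Conflict F x y) :
    branch G Z u x ⊂ branch G Z x y := by
  have hFux : F u x = x := (h.conflict_forward hxy hxu huy hF).1
  have ne_y : ∀ {a}, F a x = x → a ≠ y := by
    rintro _ ha rfl
    exact hxy.ne (ha.symm.trans hF.2)
  have hstart : (restrictTo G (Z \ {y})).Reachable x u :=
    SimpleGraph.Adj.reachable ⟨hxu.1, ⟨hxu.2.1, hxy.ne⟩, hxu.2.2, huy⟩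
  refine ⟨fun z hz => ?_, fun hsub => ?_⟩
  · refine (reachable_induction (motive := fun a => F a x = x ∧
      (restrictTo G (Z \ {y})).Reachable x a) hz ⟨hFux, hstart⟩ fun a b hab ih => ?_).2
    have hFbx := (h.left x).apply_eq_of_reachable (S := Z \ {x}) (by simp) hab.reachable ih.1
    exact ⟨hFbx, ih.2.trans (SimpleGraph.Adj.reachable
      ⟨hab.1, ⟨hab.2.1.1, ne_y ih.1⟩, hab.2.2.1, ne_y hFbx⟩)⟩
  · have hux : (restrictTo G (Z \ {x})).Reachable u x := hsub SimpleGraph.Reachable.rfl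
    obtain ⟨c, hc⟩ := hux.nonempty_neighborSet_right hxu.ne'
    exact hc.2.1.2 rfl

theorem exists_leaf_conflict [Finite V] (h : EdgeLocalRule G Z F) {x y : V}
    (hxy : (restrictTo G Z).Adj x y) (hF : Conflict F x y) :
    ∃ w v, LeafConflict G Z F w v := by
  let conflicts : Set (V × V) := {e | (restrictTo G Z).Adj e.1 e.2 ∧ Conflict F e.1 e.2}
  obtain ⟨⟨w, v⟩, ⟨hwv, hFwv⟩, hmin⟩ := conflicts.toFinite.exists_minimalFor
    (fun e => branch G Z e.1 e.2) conflicts ⟨(x, y), hxy, hF⟩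
  refine ⟨w, v, hwv, hFwv, fun u hwu => ?_⟩
  by_contra huv
  have hss := h.branch_ssubset hwv hwu huv hFwv
  exact hss.2 (hmin (j := (u, w)) ⟨hwu.symm, h.conflict_forward hwv hwu huv hFwv⟩ hss.1)

theorem eq_left_of_forall_adj (h : EdgeLocalRule G Z F) (hZ : ConnectedOn G Z)
    (hadj : ∀ x y, (restrictTo G Z).Adj x y → F x y = x) :
    ∀ x ∈ Z, ∀ y ∈ Z, F x y = x := by
  intro x hx y hy
  refine reachable_induction (hZ x hx y hy) (h.unanimous x hx) fun a b hab ih => ?_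
  rcases h.right x hab.1 with heq | ⟨hfix, _⟩
  · exact heq.symm.trans ih
  · obtain rfl : x = a := ih.symm.trans hfix
    exact hadj x b hab

theorem forall_adj_eq_left (h : EdgeLocalRule G Z F) (hZ : ConnectedOn G Z)
    (hF : ∀ x y, (restrictTo G Z).Adj x y → ¬ Conflict F x y) {x₀ y₀ : V}
    (h₀ : (restrictTo G Z).Adj x₀ y₀) (hF₀ : F x₀ y₀ = x₀) {x y : V}
    (hxy : (restrictTo G Z).Adj x y) : F x y = x := by
  have reverse : ∀ {a b}, (restrictTo G Z).Adj a b → F a b = a → F b a = b := fun hab hFab =>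
    (h.eq_or_eq_of_adj hab.symm).resolve_right fun hFba => hF _ _ hab.symm ⟨hFba, hFab⟩
  have around : ∀ {a b u}, (restrictTo G Z).Adj a b → F a b = a → (restrictTo G Z).Adj a u →
      F a u = a := fun {a b u} hab hFab hau => by
    by_cases hbu : b = u
    · exact hbu ▸ hFab
    · exact h.eq_left_forward hab.symm hau hbu (reverse hab hFab)
  exact reachable_induction (motive := fun a => ∀ u, (restrictTo G Z).Adj a u → F a u = a)
    (hZ x₀ h₀.2.1 x hxy.2.1) (fun u hu => around h₀ hF₀ hu)
    (fun a b hab ih u hu => around hab.symm (reverse hab (ih b hab)) hu) y hxy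

theorem eq_left_or_eq_right (h : EdgeLocalRule G Z F) (hZ : ConnectedOn G Z)
    (hF : ∀ x y, (restrictTo G Z).Adj x y → ¬ Conflict F x y) :
    (∀ x ∈ Z, ∀ y ∈ Z, F x y = x) ∨ ∀ x ∈ Z, ∀ y ∈ Z, F x y = y := by
  by_cases hex : ∃ x y, (restrictTo G Z).Adj x y ∧ F x y = x
  · obtain ⟨x₀, y₀, h₀, hF₀⟩ := hex
    exact Or.inl (h.eq_left_of_forall_adj hZ fun x y => h.forall_adj_eq_left hZ hF h₀ hF₀)
  · push Not at hex
    refine Or.inr fun x hx y hy => h.swap.eq_left_of_forall_adj hZ (fun a b hab => ?_) y hy x hx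
    exact (h.eq_or_eq_of_adj hab.symm).resolve_left (hex b a hab.symm)

end EdgeLocalRule

end EdgeLocalRules

/-! ### Threshold cuts and two-voter rules -/

section Cuts

variable {V : Type*} {G : SimpleGraph V} {S Z : Set V} {w v : V}

/-- The edge `w v` is the only edge of `G` leaving `S`. -/
structure BridgeCut (G : SimpleGraph V) (S : Set V) (w v : V) : Prop where
  adj : G.Adj w v
  mem : w ∈ S
  notMem : v ∉ S
  eq_of_adj : ∀ a b, G.Adj a b → a ∈ S → b ∉ S → a = w ∧ b = v

theorem BridgeCut.symm (h : BridgeCut G S w v) : BridgeCut G Sᶜ v w where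
  adj := h.adj.symm
  mem := h.notMem
  notMem := not_not.mpr h.mem
  eq_of_adj a b hab ha hb := (h.eq_of_adj b a hab.symm (not_not.mp hb) ha).symm

theorem BridgeCut.reachable_restrictTo (h : BridgeCut G S w v) (hG : G.Connected) {x : V}
    (hx : x ∈ S) : (restrictTo G S).Reachable w x :=
  reachable_restrictTo_of_forall_adj (fun a b hab ha hb => (h.eq_of_adj a b hab ha hb).1)
    (hG w x) h.mem hx

theorem BridgeCut.reachable_restrictTo_diff (h : BridgeCut G S w v) (hZ : ConnectedOn G Z)
    (hv : v ∈ Z) {x : V} (hxZ : x ∈ Z) (hxS : x ∉ S) : (restrictTo G (Z \ S)).Reachable v x := by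
  have hreach : (restrictTo (restrictTo G Z) Sᶜ).Reachable v x :=
    reachable_restrictTo_of_forall_adj
      (fun a b hab ha hb => (h.symm.eq_of_adj a b hab.1 ha hb).1)
      (hZ v hv x hxZ) h.notMem hxS
  refine hreach.mono ?_
  rintro a b ⟨⟨hab, haZ, hbZ⟩, haS, hbS⟩
  exact ⟨hab, ⟨haZ, haS⟩, hbZ, hbS⟩

end Cuts

section TwoVoterRules

variable {α : Type*} [Fintype α] [Nonempty α] {D : Set (Pref α)} {Z S : Set α}
  {F : α → α → α} {w v : α}

/-- A two-voter rule depending on the two peaks only: it is strategy-proof in each voter, and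
unanimous on `Z`. -/
structure TopsRule (D : Set (Pref α)) (Z : Set α) (F : α → α → α) : Prop where
  left : ∀ y, PeakOptimal D (fun x => F x y)
  right : ∀ x, PeakOptimal D (fun y => F x y)
  unanimous : ∀ x ∈ Z, F x x = x

theorem TopsRule.swap (h : TopsRule D Z F) : TopsRule D Z (fun x y => F y x) :=
  ⟨h.right, h.left, h.unanimous⟩

theorem TopsRule.edgeLocalRule (h : TopsRule D Z F) : EdgeLocalRule (adjGraph D) Z F :=
  ⟨fun y => (h.left y).edgeLocal, fun x => (h.right x).edgeLocal, h.unanimous⟩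

theorem TopsRule.eq_right_of_best (h : TopsRule D Z F) (hcut : BridgeCut (adjGraph D) S w v)
    (hG : PathConnectedDom D) (hZ : ConnectedOn (adjGraph D) Z) (hv : v ∈ Z) (hF : F w v = v)
    {P : Pref α} (hP : P ∈ D) (hpeak : peak P ∈ S) {u : α} (huZ : u ∈ Z) (huS : u ∉ S)
    (hbest : ∀ z ∈ Z \ S, pos P u ≤ pos P z) : F v u = u := by
  have hFwu : F w u ∈ Z \ S := (h.edgeLocalRule.right w).apply_mem_of_reachable
    (hcut.reachable_restrictTo_diff hZ hv huZ huS) (by rw [hF]; exact ⟨hv, hcut.notMem⟩)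
  have hFvu : F w u = F v u := by
    rcases h.edgeLocalRule.left u hcut.adj with heq | ⟨hfix, _⟩
    · exact heq
    · exact absurd hcut.mem (hfix ▸ hFwu.2)
  have hFPu : F (peak P) u = F w u := (h.edgeLocalRule.left u).apply_eq_of_reachable hFwu.2
    (hcut.reachable_restrictTo hG hpeak) rfl
  have hopt : pos P (F (peak P) u) ≤ pos P (F u u) := h.left u P hP u
  rw [hFPu, h.unanimous u huZ] at hopt
  exact hFvu ▸ pos_injective P (hopt.antisymm (hbest _ hFwu))

theorem TopsRule.best_outside_of_conflict (h : TopsRule D Z F)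
    (hcut : BridgeCut (adjGraph D) S w v) (hG : PathConnectedDom D)
    (hZ : ConnectedOn (adjGraph D) Z) (hv : v ∈ Z)
    (hF : Conflict F w v) {P : Pref α} (hP : P ∈ D) (hpeak : peak P ∈ S) :
    ∀ z ∈ Z \ S, pos P v ≤ pos P z := by
  obtain ⟨u, ⟨huZ, huS⟩, hmin⟩ :=
    (Z \ S).toFinite.exists_minimalFor (pos P) _ ⟨v, hv, hcut.notMem⟩
  have hbest : ∀ z ∈ Z \ S, pos P u ≤ pos P z := fun z hz =>
    (le_total (pos P u) (pos P z)).elim id (hmin hz)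
  have hFuv : F u v = u := h.swap.eq_right_of_best hcut hG hZ hv hF.2 hP hpeak huZ huS hbest
  have hFPv : F (peak P) v = v := (h.edgeLocalRule.left v).apply_eq_of_reachable hcut.notMem
    (hcut.reachable_restrictTo hG hpeak) hF.1
  have hopt : pos P (F (peak P) v) ≤ pos P (F u v) := h.left v P hP u
  rw [hFPv, hFuv] at hopt
  exact fun z hz => hopt.trans (hbest z hz)

/-- A bridge `w v` at which preferences with peak in `S` rank `v` first among the outsiders and
preferences with peak outside rank `w` first among the insiders, while `g` increases towards `w`
inside `S` and agrees with the preferences beyond their peak. -/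
structure ThresholdCut (D : Set (Pref α)) (S : Set α) (g : α → ℕ) (w v : α) : Prop where
  bridge : BridgeCut (adjGraph D) S w v
  best_outside : ∀ P ∈ D, peak P ∈ S → ∀ z ∉ S, pos P v ≤ pos P z
  best_inside : ∀ P ∈ D, peak P ∉ S → ∀ z ∈ S, pos P w ≤ pos P z
  beyond_peak : ∀ P ∈ D, peak P ∈ S → ∀ y ∈ S, ∀ z ∈ S, g (peak P) ≤ g y → g y ≤ g z →
    pos P y ≤ pos P z
  lt_of_peak_mem : ∀ P ∈ D, peak P ∈ S → pos P w < pos P v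
  le_bridge : ∀ y ∈ S, g y ≤ g w

/-- The two-voter rule attached to a threshold cut: voter `0` obtains her peak if it lies outside
`S`; if both peaks are in `S` the one with the larger `g` is chosen; otherwise voter `1` decides
between the ends of the bridge. -/
noncomputable def thresholdRule (S : Set α) (g : α → ℕ) (w v : α) (P : Fin 2 → Pref α) : α :=
  if peak (P 0) ∈ S then
    if peak (P 1) ∈ S then
      if g (peak (P 0)) ≤ g (peak (P 1)) then peak (P 1) else peak (P 0)
    else if pos (P 1) v < pos (P 1) w then v else w
  else peak (P 0)

theorem thresholdRule_pair (S : Set α) (g : α → ℕ) (w v : α) (P R : Pref α) :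
    thresholdRule S g w v ![P, R] = if peak P ∈ S then
      if peak R ∈ S then if g (peak P) ≤ g (peak R) then peak R else peak P
      else if pos R v < pos R w then v else w
    else peak P :=
  rfl

theorem isRule_thresholdRule (g : α → ℕ) : IsRule D (thresholdRule S g w v) := by
  intro P _ a ha
  simp only [thresholdRule, ha]
  split_ifs <;> rfl

namespace ThresholdCut

variable {g : α → ℕ} (h : ThresholdCut D S g w v)
include h

theorem pos_le {P : Pref α} (hP : P ∈ D) (hpeak : peak P ∈ S) {y z : α} (hy : y ∈ S)
    (hgy : g (peak P) ≤ g y) (hz : z ∈ S → g y ≤ g z) : pos P y ≤ pos P z := by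
  by_cases hzS : z ∈ S
  · exact h.beyond_peak P hP hpeak y hy z hzS hgy (hz hzS)
  · have hyw := h.beyond_peak P hP hpeak y hy w h.bridge.mem hgy (h.le_bridge y hy)
    have hwv := h.lt_of_peak_mem P hP hpeak
    have hvz := h.best_outside P hP hpeak z hzS
    omega

theorem pos_thresholdRule_le_left {P R Q : Pref α} (hP : P ∈ D) :
    pos P (thresholdRule S g w v ![P, R]) ≤ pos P (thresholdRule S g w v ![Q, R]) := by
  by_cases hPS : peak P ∈ S
  swap
  · simp [thresholdRule_pair, hPS, pos_peak]
  by_cases hRS : peak R ∈ S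
  · by_cases hg : g (peak P) ≤ g (peak R)
    · simp only [thresholdRule_pair, hPS, hRS, hg, if_true]
      refine h.pos_le hP hPS hRS hg fun _ => ?_
      by_cases hQS : peak Q ∈ S
      · rw [if_pos hQS]
        split_ifs <;> omega
      · simp_all only [if_false]
    · simp [thresholdRule_pair, hPS, hRS, hg, pos_peak]
  · simp only [thresholdRule_pair, hPS, hRS, if_true, if_false]
    by_cases hQS : peak Q ∈ S
    · rw [if_pos hQS]
    · rw [if_neg hQS]
      split_ifs
      · exact h.best_outside P hP hPS _ hQS
      · exact h.pos_le hP hPS h.bridge.mem (h.le_bridge _ hPS) fun hQ => absurd hQ hQS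

theorem pos_thresholdRule_le_right {P R Q : Pref α} (hP : P ∈ D) :
    pos P (thresholdRule S g w v ![R, P]) ≤ pos P (thresholdRule S g w v ![R, Q]) := by
  simp only [thresholdRule_pair]
  by_cases hRS : peak R ∈ S
  swap
  · simp only [hRS, if_false, le_refl]
  simp only [hRS, if_true]
  by_cases hPS : peak P ∈ S
  · simp only [hPS, if_true]
    by_cases hg : g (peak R) ≤ g (peak P)
    · simp only [hg, if_true, pos_peak, Nat.zero_le]
    · rw [if_neg hg]
      refine h.pos_le hP hPS hRS (by omega) fun _ => ?_
      have := h.le_bridge _ hRS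
      have := h.bridge.notMem
      split_ifs at * <;> first | omega | contradiction
  · simp only [hPS, if_false]
    have hQ : ∀ z ∈ S, pos P w ≤ pos P z := h.best_inside P hP hPS
    have hwQ := hQ (peak Q)
    have hwR := hQ _ hRS
    split_ifs <;> grind

theorem strategyProof_thresholdRule : StrategyProof D (thresholdRule S g w v) := by
  rw [strategyProof_iff]
  intro P hP i Q _
  obtain ⟨P₀, P₁, rfl⟩ : ∃ P₀ P₁, P = ![P₀, P₁] :=
    ⟨P 0, P 1, funext fun j => by fin_cases j <;> rfl⟩
  fin_cases i
  · have hupd : Function.update ![P₀, P₁] 0 Q = ![Q, P₁] :=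
      funext fun j => by fin_cases j <;> rfl
    exact hupd ▸ h.pos_thresholdRule_le_left (hP 0)
  · have hupd : Function.update ![P₀, P₁] 1 Q = ![P₀, Q] :=
      funext fun j => by fin_cases j <;> rfl
    exact hupd ▸ h.pos_thresholdRule_le_right (hP 1)

theorem pos_lt_pos_of_peak_eq (htod : TopsOnlyDomain D) {P P' : Pref α} (hP : P ∈ D)
    (hP' : P' ∈ D) (hpeak : peak P = peak P') (hPS : peak P ∉ S) (hlt : pos P v < pos P w) :
    pos P' v < pos P' w := by
  obtain ⟨R, hR, -, -, hRw, -⟩ := exists_swapped_prefs_of_adj h.bridge.adj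
  have hRS : peak R ∈ S := peak_eq_of_pos_eq_zero hRw ▸ h.bridge.mem
  -- Voter `1` decides between `v` and `w`, and by the tops-only property only her peak matters.
  have heq : thresholdRule S g w v ![R, P] = thresholdRule S g w v ![R, P'] :=
    htod 2 le_rfl _ (isRule_thresholdRule g) h.strategyProof_thresholdRule _ _
      (Fin.forall_fin_two.mpr ⟨hR, hP⟩) (Fin.forall_fin_two.mpr ⟨hR, hP'⟩)
      (Fin.forall_fin_two.mpr ⟨rfl, hpeak⟩)
  by_contra hge
  simp only [thresholdRule_pair, hRS, hPS, hpeak ▸ hPS, hlt, hge, if_true, if_false] at heq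
  exact h.bridge.adj.ne heq.symm

theorem pos_lt_pos_of_adj (htod : TopsOnlyDomain D) {b c : α}
    (hbc : (restrictTo (adjGraph D) Sᶜ).Adj b c)
    (hb : ∀ P ∈ D, peak P = b → pos P v < pos P w) :
    ∀ P ∈ D, peak P = c → pos P v < pos P w := by
  obtain ⟨hadj, hbS, hcS⟩ := hbc
  obtain ⟨Q, hQ, R, hR, hQb, hQc, hRc, hRb, hpos⟩ := exists_swapped_prefs_of_adj hadj
  have hwb : w ≠ b := fun e => hbS (e ▸ h.bridge.mem)
  have hwc : w ≠ c := fun e => hcS (e ▸ h.bridge.mem)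
  have hRpeak : peak R = c := peak_eq_of_pos_eq_zero hRc
  have hQlt : pos Q v < pos Q w := hb Q hQ (peak_eq_of_pos_eq_zero hQb)
  have hQw0 : pos Q w ≠ pos Q b := fun e => hwb (pos_injective Q e)
  have hQw1 : pos Q w ≠ pos Q c := fun e => hwc (pos_injective Q e)
  have hRlt : pos R v < pos R w := by
    rw [← hpos w hwb hwc]
    rcases eq_or_ne v b with rfl | hvb
    · omega
    rcases eq_or_ne v c with rfl | hvc
    · omega
    · rwa [← hpos v hvb hvc]
  exact fun P hP hPc => h.pos_lt_pos_of_peak_eq htod hR hP (hRpeak.trans hPc.symm)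
    (hRpeak ▸ hcS) hRlt

theorem pos_lt_pos_of_peak_notMem (htod : TopsOnlyDomain D) (hG : PathConnectedDom D) :
    ∀ P ∈ D, peak P ∉ S → pos P v < pos P w := by
  intro P hP hPS
  have hreach : (restrictTo (adjGraph D) Sᶜ).Reachable v (peak P) :=
    h.bridge.symm.reachable_restrictTo hG hPS
  refine reachable_induction (motive := fun c => ∀ P ∈ D, peak P = c → pos P v < pos P w)
    hreach ?_ (fun b c hbc hb => h.pos_lt_pos_of_adj htod hbc hb) P hP rfl
  rintro P - rfl
  have hne : pos P (peak P) ≠ pos P w := fun e => h.bridge.adj.ne (pos_injective P e).symm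
  rw [pos_peak] at hne ⊢
  exact Nat.pos_of_ne_zero hne.symm

end ThresholdCut

end TwoVoterRules

/-! ### Domains that are single-peaked at both ends -/

section SinglePeakedEnds

variable {α : Type*} [Fintype α] [Nonempty α] {D : Set (Pref α)} {L U : Pref α} {p q : ℕ}

/-- `P` behaves along the line `L` as a single-peaked preference as long as no alternatives
beyond position `p` are compared: up to `p` it improves towards its peak, and from its peak on
every alternative up to `p` beats all later ones. -/
structure SinglePeakedUpTo (L : Pref α) (p : ℕ) (P : Pref α) : Prop where
  toward : ∀ x y, pos L x < pos L y → pos L y ≤ p → pos L y ≤ pos L (peak P) →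
    pos P y < pos P x
  away : ∀ x y, pos L x ≤ p → pos L (peak P) ≤ pos L x → pos L x < pos L y →
    pos P x < pos P y

theorem pos_lt_of_peak_ne {P : Pref α} {x y : α} (hx : peak P = x) (hy : y ≠ x) :
    pos P x < pos P y := by
  have hne : pos P y ≠ pos P x := fun e => hy (pos_injective P e)
  rw [← hx, pos_peak] at hne ⊢
  exact Nat.pos_of_ne_zero hne

theorem SinglePeakedUpTo.mono {P : Pref α} (h : SinglePeakedUpTo L q P) (hpq : p ≤ q) :
    SinglePeakedUpTo L p P where
  toward x y hxy hy := h.toward x y hxy (hy.trans hpq)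
  away x y hx := h.away x y (hx.trans hpq)

theorem singlePeakedUpTo_zero (L P : Pref α) : SinglePeakedUpTo L 0 P where
  toward _ _ hxy hy _ := absurd hxy (by omega)
  away x _ hx hpeak hxy :=
    pos_lt_of_peak_ne (pos_injective L (by omega)) (by rintro rfl; exact hxy.ne rfl)

theorem pos_eq_of_adj_of_lt (hL : ∀ P ∈ D, SinglePeakedUpTo L p P) {x y : α}
    (hxy : (adjGraph D).Adj x y) (hx : pos L x < p) (hy : p ≤ pos L y) : pos L y = p := by
  obtain ⟨P, hP, -, -, hPx, hPy, -⟩ := exists_swapped_prefs_of_adj hxy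
  have hrk : pos L (rk L p) = p := pos_rk L (hy.trans_lt (pos_lt_card L y))
  by_contra hne
  have hpeak : peak P = x := peak_eq_of_pos_eq_zero hPx
  have hlt := (hL P hP).away (rk L p) y (by omega) (by rw [hpeak]; omega) (by omega)
  have hx' : rk L p = x := pos_injective P (by omega)
  rw [hx'] at hrk
  omega

theorem le_pos_of_adj (hL : ∀ P ∈ D, SinglePeakedUpTo L p P) {x y : α}
    (hxy : (adjGraph D).Adj x y) (hx : p < pos L x) : p ≤ pos L y := by
  by_contra hy
  exact hx.ne' (pos_eq_of_adj_of_lt hL hxy.symm (by omega) hx.le)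

/-- The alternatives that are neither among the first `p` of `L` nor among the first `q` of `U`. -/
def freeZone (L U : Pref α) (p q : ℕ) : Set α := {a | p ≤ pos L a ∧ q ≤ pos U a}

omit [Nonempty α] in
theorem freeZone_comm (L U : Pref α) (p q : ℕ) : freeZone L U p q = freeZone U L q p :=
  Set.ext fun _ => and_comm

/-- The alternatives at positions `0, …, p` of `L`. -/
def initialSegment (L : Pref α) (p : ℕ) : Set α := {a | pos L a ≤ p}

omit [Nonempty α] in
theorem notMem_initialSegment {a : α} : a ∉ initialSegment L p ↔ p < pos L a := Nat.not_le

/-- A path-connected domain containing the two completely reversed preferences `L` and `U`,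
single-peaked at both ends of the line they define and with at least three alternatives left
in between. -/
structure SinglePeakedEnds (D : Set (Pref α)) (L U : Pref α) (p q : ℕ) : Prop where
  connected : PathConnectedDom D
  left_mem : L ∈ D
  right_mem : U ∈ D
  reversed : Reversed L U
  left : ∀ P ∈ D, SinglePeakedUpTo L p P
  right : ∀ P ∈ D, SinglePeakedUpTo U q P
  add_le_card : p + q + 3 ≤ Fintype.card α

namespace SinglePeakedEnds

variable (h : SinglePeakedEnds D L U p q)
include h

theorem swap : SinglePeakedEnds D U L q p :=
  ⟨h.connected, h.right_mem, h.left_mem, Reversed.symm h.reversed, h.right, h.left, by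
    have := h.add_le_card; omega⟩

theorem pos_add_pos (a : α) : pos L a + pos U a + 1 = Fintype.card α :=
  Reversed.pos_add_pos h.reversed a

theorem pos_rk_left : pos L (rk L p) = p := pos_rk L (by have := h.add_le_card; omega)

theorem rk_mem_freeZone : rk L p ∈ freeZone L U p q := by
  have hL := h.pos_rk_left
  have := h.pos_add_pos (rk L p)
  have := h.add_le_card
  exact ⟨hL.ge, by omega⟩

theorem nontrivial_freeZone : (freeZone L U p q).Nontrivial := by
  refine ⟨rk L p, h.rk_mem_freeZone, rk U q, freeZone_comm U L q p ▸ h.swap.rk_mem_freeZone,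
    fun heq => ?_⟩
  have hU := h.swap.pos_rk_left
  have hL := h.pos_rk_left
  rw [← heq] at hU
  have := h.pos_add_pos (rk L p)
  have := h.add_le_card
  omega

theorem pos_rk_lt {P : Pref α} (hP : P ∈ D) (hpeak : p ≤ pos L (peak P)) {z : α}
    (hz : pos L z < p) : pos P (rk L p) < pos P z := by
  have hL := h.pos_rk_left
  exact (h.left P hP).toward z (rk L p) (by omega) (by omega) (by omega)

theorem connectedOn_freeZone : ConnectedOn (adjGraph D) (freeZone L U p q) := by
  intro x hx y hy
  have hleft : (restrictTo (adjGraph D) {a | p ≤ pos L a}).Reachable x y :=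
    reachable_restrictTo_of_forall_adj (v := rk L p) (fun a b hab ha hb => pos_injective L <|
      (pos_eq_of_adj_of_lt h.left hab.symm (not_le.mp hb) ha).trans h.pos_rk_left.symm)
      (SimpleGraph.Connected.preconnected h.connected x y) hx.1 hy.1
  have hboth : (restrictTo (restrictTo (adjGraph D) {a | p ≤ pos L a})
      {a | q ≤ pos U a}).Reachable x y :=
    reachable_restrictTo_of_forall_adj (v := rk U q) (fun a b hab ha hb => pos_injective U <|
      (pos_eq_of_adj_of_lt h.right hab.1.symm (not_le.mp hb) ha).trans h.swap.pos_rk_left.symm)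
      hleft hx.2 hy.2
  refine hboth.mono ?_
  rintro a b ⟨⟨hab, haL, hbL⟩, haU, hbU⟩
  exact ⟨hab, ⟨haL, haU⟩, hbL, hbU⟩

section LeafConflicts

variable {F : α → α → α} {w v : α} (hF : TopsRule D (freeZone L U p q) F)
  (hwv : LeafConflict (adjGraph D) (freeZone L U p q) F w v)

include hwv in
theorem bridgeCut_singleton (hp : p < pos L w) (hq : q < pos U w) :
    BridgeCut (adjGraph D) {w} w v where
  adj := hwv.adj.1
  mem := rfl
  notMem := hwv.adj.1.ne'
  eq_of_adj := by
    rintro _ b hab rfl -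
    exact ⟨rfl, hwv.leaf b ⟨hab, hwv.adj.2.1, le_pos_of_adj h.left hab hp,
      le_pos_of_adj h.right hab hq⟩⟩

include hF hwv

theorem thresholdCut_singleton (hp : p < pos L w) (hq : q < pos U w) :
    ThresholdCut D {w} (pos L) w v where
  bridge := h.bridgeCut_singleton hwv hp hq
  best_outside P hP hpeak z hz := by
    have best : ∀ u ∈ freeZone L U p q \ {w}, pos P v ≤ pos P u :=
      hF.best_outside_of_conflict (h.bridgeCut_singleton hwv hp hq) h.connected
        h.connectedOn_freeZone hwv.adj.2.2 hwv.conflict hP hpeak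
    have hpeak_eq : peak P = w := hpeak
    have hL := h.pos_rk_left
    have hU := h.swap.pos_rk_left
    by_cases hzp : pos L z < p
    · exact (best _ ⟨h.rk_mem_freeZone, by rintro rfl; omega⟩).trans
        (h.pos_rk_lt hP (by rw [hpeak_eq]; omega) hzp).le
    by_cases hzq : pos U z < q
    · exact (best _ ⟨freeZone_comm U L q p ▸ h.swap.rk_mem_freeZone, by rintro rfl; omega⟩).trans
        (h.swap.pos_rk_lt hP (by rw [hpeak_eq]; omega) hzq).le
    · exact best z ⟨⟨not_lt.mp hzp, not_lt.mp hzq⟩, hz⟩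
  best_inside _ _ _ _ hz := by rw [Set.mem_singleton_iff.mp hz]
  beyond_peak _ _ _ _ hy _ hz _ _ := by
    rw [Set.mem_singleton_iff.mp hy, Set.mem_singleton_iff.mp hz]
  lt_of_peak_mem _ _ hpeak := pos_lt_of_peak_ne hpeak hwv.adj.1.ne'
  le_bridge _ hy := by rw [Set.mem_singleton_iff.mp hy]

theorem pos_eq_of_leafConflict (htod : TopsOnlyDomain D) : pos L w = p ∨ pos U w = q := by
  by_contra! hne
  have hp : p < pos L w := lt_of_le_of_ne hwv.adj.2.1.1 hne.1.symm
  have hq : q < pos U w := lt_of_le_of_ne hwv.adj.2.1.2 hne.2.symm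
  have hcut := h.thresholdCut_singleton hF hwv hp hq
  have peak_ne : ∀ P, 0 < pos P w → peak P ∉ ({w} : Set α) := by
    rintro P hPw (hpeak : peak P = w)
    rw [← hpeak, pos_peak] at hPw
    exact hPw.ne rfl
  -- Both of the reversed preferences would rank `v` above `w`.
  have hL := hcut.pos_lt_pos_of_peak_notMem htod h.connected L h.left_mem (peak_ne L (by omega))
  have hU := hcut.pos_lt_pos_of_peak_notMem htod h.connected U h.right_mem (peak_ne U (by omega))
  have := h.pos_add_pos v
  have := h.pos_add_pos w
  omega

omit hF in
theorem bridgeCut_initial (hw : pos L w = p) :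
    BridgeCut (adjGraph D) (initialSegment L p) w v where
  adj := hwv.adj.1
  mem := hw.le
  notMem hv := hwv.adj.1.ne (pos_injective L (hw.trans (le_antisymm hv hwv.adj.2.2.1).symm))
  eq_of_adj a b hab ha hb := by
    rw [notMem_initialSegment] at hb
    have haw : a = w := by
      refine pos_injective L (hw.symm ▸ le_antisymm ha (not_lt.mp fun hlt => ?_))
      have := pos_eq_of_adj_of_lt h.left hab hlt hb.le
      omega
    subst haw
    have hUa : q < pos U a := by
      have := h.pos_add_pos a
      have := h.add_le_card
      omega
    exact ⟨rfl, hwv.leaf b ⟨hab, hwv.adj.2.1, hb.le, le_pos_of_adj h.right hab hUa⟩⟩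

theorem thresholdCut_initial (hw : pos L w = p) :
    ThresholdCut D (initialSegment L p) (pos L) w v where
  bridge := h.bridgeCut_initial hwv hw
  best_outside P hP hpeak z hz := by
    rw [notMem_initialSegment] at hz
    have best : ∀ u ∈ freeZone L U p q \ initialSegment L p, pos P v ≤ pos P u :=
      hF.best_outside_of_conflict (h.bridgeCut_initial hwv hw) h.connected
        h.connectedOn_freeZone hwv.adj.2.2 hwv.conflict hP hpeak
    by_cases hzq : pos U z < q
    · have hpeakL : pos L (peak P) ≤ p := hpeak
      have hcard := h.add_le_card
      have hpeakU := h.pos_add_pos (peak P)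
      have hrkU := h.pos_add_pos (rk U q)
      have hrk := h.swap.pos_rk_left
      exact (best _ ⟨freeZone_comm U L q p ▸ h.swap.rk_mem_freeZone,
        notMem_initialSegment.mpr (by omega)⟩).trans (h.swap.pos_rk_lt hP (by omega) hzq).le
    · exact best z ⟨⟨hz.le, not_lt.mp hzq⟩, notMem_initialSegment.mpr hz⟩
  best_inside P hP hpeak z hz := by
    rw [notMem_initialSegment] at hpeak
    have hz' : pos L z ≤ p := hz
    rcases hz'.lt_or_eq with hlt | heq
    · exact ((h.left P hP).toward z w (by omega) hw.le (by omega)).le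
    · rw [pos_injective L (hw.trans heq.symm)]
  beyond_peak P hP _ y hy z _ hpeak hyz := by
    rcases hyz.lt_or_eq with hlt | heq
    · exact ((h.left P hP).away y z hy hpeak hlt).le
    · rw [pos_injective L heq]
  lt_of_peak_mem P hP hpeak := by
    have hpeakL : pos L (peak P) ≤ p := hpeak
    have hv := notMem_initialSegment.mp (h.bridgeCut_initial hwv hw).notMem
    exact (h.left P hP).away w v hw.le (by omega) (by omega)
  le_bridge _ hy := hw.symm ▸ hy

theorem pos_right_of_leafConflict (hw : pos L w = p) : pos L v = p + 1 := by
  have hcut := h.thresholdCut_initial hF hwv hw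
  have hv : p < pos L v := notMem_initialSegment.mp hcut.bridge.notMem
  have hrk : pos L (rk L (p + 1)) = p + 1 := pos_rk L (by have := h.add_le_card; omega)
  have hbest := hcut.best_outside L h.left_mem ((pos_peak L).trans_le p.zero_le) (rk L (p + 1))
    (notMem_initialSegment.mpr (by omega))
  omega

theorem singlePeakedUpTo_succ (htod : TopsOnlyDomain D) (hw : pos L w = p) {P : Pref α}
    (hP : P ∈ D) : SinglePeakedUpTo L (p + 1) P where
  toward x y hxy hy hpeak := by
    have hcut := h.thresholdCut_initial hF hwv hw
    rcases hy.lt_or_eq with hlt | heq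
    · exact (h.left P hP).toward x y hxy (by omega) hpeak
    have hyv : y = v := pos_injective L (heq.trans (h.pos_right_of_leafConflict hF hwv hw).symm)
    have hpeakS : peak P ∉ initialSegment L p := notMem_initialSegment.mpr (by omega)
    have hvw := hcut.pos_lt_pos_of_peak_notMem htod h.connected P hP hpeakS
    exact hyv ▸ hvw.trans_le
      (hcut.best_inside P hP hpeakS x (Nat.le_of_lt_succ (hxy.trans_eq heq)))
  away x y hx hpeak hxy := by
    have hcut := h.thresholdCut_initial hF hwv hw
    rcases hx.lt_or_eq with hlt | heq
    · exact (h.left P hP).away x y (by omega) hpeak hxy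
    have hxv : x = v := pos_injective L (heq.trans (h.pos_right_of_leafConflict hF hwv hw).symm)
    by_cases hpeakS : pos L (peak P) ≤ p
    · have hvy := hcut.best_outside P hP hpeakS y (notMem_initialSegment.mpr (by omega))
      refine (hxv ▸ hvy).lt_of_ne fun e => ?_
      exact hxy.ne (congrArg (pos L) (pos_injective P e))
    · exact pos_lt_of_peak_ne (pos_injective L (by omega)) (by rintro rfl; exact hxy.ne rfl)

end LeafConflicts

theorem eq_left_or_eq_right (htod : TopsOnlyDomain D)
    (hp : ¬ ∀ P ∈ D, SinglePeakedUpTo L (p + 1) P) (hq : ¬ ∀ P ∈ D, SinglePeakedUpTo U (q + 1) P)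
    {F : α → α → α} (hF : TopsRule D (freeZone L U p q) F) :
    (∀ x ∈ freeZone L U p q, ∀ y ∈ freeZone L U p q, F x y = x) ∨
      ∀ x ∈ freeZone L U p q, ∀ y ∈ freeZone L U p q, F x y = y := by
  refine hF.edgeLocalRule.eq_left_or_eq_right h.connectedOn_freeZone fun x y hxy hconf => ?_
  obtain ⟨w, v, hwv⟩ := hF.edgeLocalRule.exists_leaf_conflict hxy hconf
  rcases h.pos_eq_of_leafConflict hF hwv htod with hw | hw
  · exact hp fun P hP => h.singlePeakedUpTo_succ hF hwv htod hw hP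
  · rw [freeZone_comm] at hF hwv
    exact hq fun P hP => h.swap.singlePeakedUpTo_succ hF hwv htod hw hP

end SinglePeakedEnds

end SinglePeakedEnds

/-! ### From two voters to `n` voters -/

section ManyVoters

variable {α ι : Type*} [Fintype α] [Nonempty α] [DecidableEq ι] {D : Set (Pref α)} {Z : Set α}
  {f : (ι → α) → α}

/-- A rule for the voters `ι` that depends on the reported peaks only, is strategy-proof in each
voter, and is unanimous. -/
structure TopsFunction (D : Set (Pref α)) (f : (ι → α) → α) : Prop where
  peakOptimal : ∀ i x, PeakOptimal D (fun b => f (Function.update x i b))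
  unanimous : ∀ a, f (fun _ => a) = a

/-- The coalition `S` decides between any two alternatives of `Z`. -/
def Decisive (f : (ι → α) → α) (Z : Set α) (S : Finset ι) : Prop :=
  ∀ x ∈ Z, ∀ y ∈ Z, f (S.piecewise (fun _ => x) (fun _ => y)) = x

/-- Every two-voter rule unanimous on `Z` is dictatorial on `Z`. -/
def TwoVoterDictatorial (D : Set (Pref α)) (Z : Set α) : Prop :=
  ∀ F, TopsRule D Z F → (∀ x ∈ Z, ∀ y ∈ Z, F x y = x) ∨ ∀ x ∈ Z, ∀ y ∈ Z, F x y = y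

theorem piecewise_piecewise_comm {ι β : Type*} [DecidableEq ι] {s t : Finset ι}
    (hst : Disjoint s t) (x y z : ι → β) :
    s.piecewise x (t.piecewise y z) = t.piecewise y (s.piecewise x z) := by
  ext j
  by_cases hs : j ∈ s
  · simp [hs, Finset.disjoint_left.mp hst hs]
  · by_cases ht : j ∈ t <;> simp [hs, ht]

theorem piecewise_union {ι β : Type*} [DecidableEq ι] (s t : Finset ι) (x y : ι → β) :
    (s ∪ t).piecewise x y = s.piecewise x (t.piecewise x y) := by
  ext j
  by_cases hs : j ∈ s <;> by_cases ht : j ∈ t <;> simp [hs, ht]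

namespace TopsFunction

theorem pos_piecewise_peak_le (hf : TopsFunction D f) {P : Pref α} (hP : P ∈ D) (s : Finset ι)
    (x : ι → α) : pos P (f (s.piecewise (fun _ => peak P) x)) ≤ pos P (f x) := by
  induction s using Finset.induction_on with
  | empty => rw [Finset.piecewise_empty]
  | insert i s _ ih =>
    rw [Finset.piecewise_insert]
    have hstep := hf.peakOptimal i (s.piecewise (fun _ => peak P) x) P hP
      (s.piecewise (fun _ => peak P) x i)
    simp only [Function.update_eq_self] at hstep
    exact hstep.trans ih

theorem peakOptimal_piecewise (hf : TopsFunction D f) (s : Finset ι) (x : ι → α) :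
    PeakOptimal D (fun b => f (s.piecewise (fun _ => b) x)) := by
  intro P hP b
  have h := hf.pos_piecewise_peak_le hP s (s.piecewise (fun _ => b) x)
  rwa [Finset.piecewise_idem_right] at h

theorem topsRule_coalitions (hf : TopsFunction D f) {s t : Finset ι} (hst : Disjoint s t)
    {z : ι → α} (hz : ∀ x ∈ Z, f ((s ∪ t).piecewise (fun _ => x) z) = x) :
    TopsRule D Z fun x y => f (s.piecewise (fun _ => x) (t.piecewise (fun _ => y) z)) where
  left y := hf.peakOptimal_piecewise s _
  right x := by
    simp only [piecewise_piecewise_comm hst]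
    exact hf.peakOptimal_piecewise t _
  unanimous x hx := by
    rw [← piecewise_union]
    exact hz x hx

theorem decisive_or_decisive_compl [Fintype ι] (hf : TopsFunction D f)
    (hK : TwoVoterDictatorial D Z) (s : Finset ι) : Decisive f Z s ∨ Decisive f Z sᶜ := by
  have hrule := hf.topsRule_coalitions (Z := Z) (z := fun _ => Classical.arbitrary α)
    (disjoint_compl_right (a := s)) fun x _ => by
      rw [Finset.union_compl, Finset.piecewise_univ, hf.unanimous]
  simp only [Finset.piecewise_compl, Finset.piecewise_idem_right] at hrule
  refine (hK _ hrule).imp_right fun h x hx y hy => ?_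
  rw [Finset.piecewise_compl]
  exact h y hy x hx

variable [Finite ι]

theorem apply_mem (hf : TopsFunction D f) (hZ : ConnectedOn (adjGraph D) Z) (hne : Z.Nonempty)
    {x : ι → α} (hx : ∀ j, x j ∈ Z) : f x ∈ Z := by
  obtain ⟨z, hz⟩ := hne
  cases nonempty_fintype ι
  suffices ∀ s : Finset ι, f (s.piecewise x fun _ => z) ∈ Z by
    simpa only [Finset.piecewise_univ] using this Finset.univ
  intro s
  induction s using Finset.induction_on with
  | empty => rwa [Finset.piecewise_empty, hf.unanimous]
  | insert i s hi ih =>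
    rw [Finset.piecewise_insert]
    have hself : Function.update (s.piecewise x fun _ => z) i z = s.piecewise x fun _ => z := by
      rw [Function.update_eq_self_iff, Finset.piecewise_eq_of_notMem _ _ _ hi]
    exact (hf.peakOptimal i _).edgeLocal.apply_mem_of_reachable (hZ z hz (x i) (hx i))
      (hself.symm ▸ ih)

theorem decisive_of_apply_eq (hf : TopsFunction D f) (hK : TwoVoterDictatorial D Z)
    {x y : α} (hx : x ∈ Z) (hy : y ∈ Z) (hne : x ≠ y) {s : Finset ι}
    (h : f (s.piecewise (fun _ => x) fun _ => y) = x) : Decisive f Z s := by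
  cases nonempty_fintype ι
  refine (hf.decisive_or_decisive_compl hK s).resolve_right fun hcompl => hne ?_
  rw [← h, ← Finset.piecewise_compl, hcompl y hy x hx]

theorem decisive_of_decisive_union (hf : TopsFunction D f) (hK : TwoVoterDictatorial D Z)
    (hZ : Z.Nontrivial) {s t : Finset ι} (hst : Disjoint s t) (h : Decisive f Z (s ∪ t)) :
    Decisive f Z s ∨ Decisive f Z t := by
  obtain ⟨x, hx, y, hy, hne⟩ := hZ
  have hrule := hf.topsRule_coalitions (z := fun _ => y) hst fun x hx => h x hx y hy
  refine (hK _ hrule).imp (fun hs => ?_) fun ht => ?_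
  · have hxy := hs x hx y hy
    rw [Finset.piecewise_same] at hxy
    exact hf.decisive_of_apply_eq hK hx hy hne hxy
  · have hyx := ht y hy x hx
    rw [piecewise_piecewise_comm hst, Finset.piecewise_same] at hyx
    exact hf.decisive_of_apply_eq hK hx hy hne hyx

theorem exists_decisive_singleton (hf : TopsFunction D f) (hK : TwoVoterDictatorial D Z)
    (hZ : Z.Nontrivial) : ∃ i, Decisive f Z {i} := by
  cases nonempty_fintype ι
  have shrink : ∀ s : Finset ι, Decisive f Z s → ∃ i, Decisive f Z {i} := by
    intro s
    induction s using Finset.induction_on with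
    | empty =>
      obtain ⟨x, hx, y, hy, hne⟩ := hZ
      intro hs
      have hxy := hs x hx y hy
      rw [Finset.piecewise_empty, hf.unanimous] at hxy
      exact absurd hxy.symm hne
    | insert i s hi ih =>
      intro hs
      rw [Finset.insert_eq] at hs
      rcases hf.decisive_of_decisive_union hK hZ (Finset.disjoint_singleton_left.mpr hi) hs with
        hi | hs
      · exact ⟨i, hi⟩
      · exact ih hs
  refine shrink Finset.univ fun x _ y _ => ?_
  rw [Finset.piecewise_univ, hf.unanimous]

theorem apply_eq_of_decisive_singleton (hf : TopsFunction D f)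
    (hrich : MinimallyRich D) (hZ : ConnectedOn (adjGraph D) Z) {i : ι} (hi : Decisive f Z {i})
    {x : ι → α} (hx : ∀ j, x j ∈ Z) : f x = x i := by
  have hfx : f x ∈ Z := hf.apply_mem hZ ⟨x i, hx i⟩ hx
  obtain ⟨P, hP, hpeak⟩ := hrich (f x)
  cases nonempty_fintype ι
  -- Let every voter other than `i` move to the outcome: this can only improve it for `P`.
  have hle := hf.pos_piecewise_peak_le hP {i}ᶜ x
  have hsingle : Finset.piecewise {i} x (fun _ => f x) =
      Finset.piecewise {i} (fun _ => x i) fun _ => f x := by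
    simp only [Finset.piecewise_singleton]
  rw [hpeak, Finset.piecewise_compl, hsingle, hi _ (hx i) _ hfx, ← hpeak, pos_peak] at hle
  rw [← hpeak]
  exact peak_eq_of_pos_eq_zero (Nat.le_zero.mp hle)

end TopsFunction

section Domain

variable {n : ℕ} {f : (Fin n → Pref α) → α}

theorem exists_topsFunction (hrich : MinimallyRich D) (hrule : IsRule D f)
    (hsp : StrategyProof D f) (htops : TopsOnly D f) :
    ∃ g : (Fin n → α) → α, TopsFunction D g ∧ ∀ P, InDom D P → f P = g fun i => peak (P i) := by
  choose pref hprefD hprefpeak using hrich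
  have hdom : ∀ x : Fin n → α, InDom D fun i => pref (x i) := fun x i => hprefD (x i)
  refine ⟨fun x => f fun i => pref (x i), ⟨fun i x P hP b => ?_, fun a => ?_⟩, fun P hP => ?_⟩
  · have update_pref : ∀ Q ∈ D, f (Function.update (fun j => pref (x j)) i Q) =
        f fun j => pref (Function.update x i (peak Q) j) := by
      intro Q hQ
      refine htops _ _ (fun j => ?_) (hdom _) fun j => ?_
      all_goals rcases eq_or_ne j i with rfl | hj
      all_goals simp [*]
    have hbest := (strategyProof_iff.mp hsp) (Function.update (fun j => pref (x j)) i P)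
      (fun j => by rcases eq_or_ne j i with rfl | hj <;> simp [*]) i (pref b) (hprefD b)
    rwa [Function.update_idem, update_pref P hP, update_pref _ (hprefD b), hprefpeak,
      Function.update_self] at hbest
  · exact hrule _ (fun _ => hprefD a) a fun _ => hprefpeak a
  · exact htops P _ hP (hdom _) fun i => (hprefpeak _).symm

theorem dictatorOn_of_twoVoterDictatorial (hrich : MinimallyRich D)
    (hZ : ConnectedOn (adjGraph D) Z) (hZ' : Z.Nontrivial) (hK : TwoVoterDictatorial D Z)
    (hrule : IsRule D f) (hsp : StrategyProof D f) (htops : TopsOnly D f) :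
    DictatorOn D f Z := by
  obtain ⟨g, hg, hfg⟩ := exists_topsFunction hrich hrule hsp htops
  obtain ⟨i, hi⟩ := hg.exists_decisive_singleton hK hZ'
  exact ⟨i, fun P hP hpeak =>
    (hfg P hP).trans (hg.apply_eq_of_decisive_singleton hrich hZ hi hpeak)⟩

theorem not_anonymous_of_dictatorOn (hrich : MinimallyRich D) (hZ : Z.Nontrivial) (hn : 2 ≤ n)
    (h : DictatorOn D f Z) : ¬ Anonymous D f := by
  intro hanon
  obtain ⟨i, hi⟩ := h
  obtain ⟨x, hx, y, hy, hne⟩ := hZ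
  obtain ⟨P, hP, rfl⟩ := hrich x
  obtain ⟨Q, hQ, rfl⟩ := hrich y
  have : Nontrivial (Fin n) := Fin.nontrivial_iff_two_le.mpr hn
  obtain ⟨j, hj⟩ := exists_ne i
  have hdom : InDom D (Function.update (fun _ : Fin n => Q) i P) := fun k => by
    rcases eq_or_ne k i with rfl | hk <;> simp [*]
  have hpeak : ∀ k, peak (Function.update (fun _ : Fin n => Q) i P k) ∈ Z := fun k => by
    rcases eq_or_ne k i with rfl | hk <;> simp [*]
  have hswap := hi (Function.update (fun _ => Q) i P ∘ Equiv.swap i j) (fun _ => hdom _)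
    fun _ => hpeak _
  rw [hanon _ hdom, hi _ hdom hpeak] at hswap
  simp only [Function.comp_apply, Equiv.swap_apply_left, Function.update_self,
    Function.update_of_ne hj] at hswap
  exact hne hswap

end Domain

end ManyVoters

/-! ### Trees -/

section Trees

variable {V : Type*} {T : SimpleGraph V} {a b : V}

theorem dist_eq_length_of_isPath (hT : T.IsAcyclic) {x y : V} {w : T.Walk x y} (hw : w.IsPath) :
    T.dist x y = w.length := by
  obtain ⟨w', hw', hlen⟩ := w.reachable.exists_path_of_dist
  have heq : w' = w := congrArg Subtype.val <|
    (hT.subsingleton_path x y).elim ⟨w', hw'⟩ ⟨w, hw⟩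
  rw [← hlen, heq]

theorem dist_across_edge (hT : T.IsTree) {x u v z : V} (huv : T.Adj u v)
    (hx : T.dist x v = T.dist x u + 1) (hz : T.dist u z = T.dist v z + 1) :
    T.dist x z = T.dist x u + 1 + T.dist v z := by
  obtain ⟨w, hw⟩ := hT.connected.exists_walk_length_eq_dist x u
  obtain ⟨w', hw'⟩ := hT.connected.exists_walk_length_eq_dist v z
  have hleft : (w.concat huv).IsPath :=
    SimpleGraph.Walk.isPath_of_length_eq_dist _ (by rw [SimpleGraph.Walk.length_concat, hw, hx])
  have hright : (SimpleGraph.Walk.cons huv w').IsPath :=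
    SimpleGraph.Walk.isPath_of_length_eq_dist _ (by rw [SimpleGraph.Walk.length_cons, hw', hz])
  have hpath : (w.append (.cons huv w')).IsPath := by
    rw [hT.isAcyclic.isPath_iff_isChain] at hleft hright ⊢
    rw [SimpleGraph.Walk.edges_concat, List.concat_eq_append] at hleft
    rw [SimpleGraph.Walk.edges_cons] at hright
    rw [SimpleGraph.Walk.edges_append, SimpleGraph.Walk.edges_cons]
    have hchain := List.IsChain.append_overlap hleft (l₃ := w'.edges) hright
      (List.cons_ne_nil _ _)
    rwa [List.append_assoc, List.singleton_append] at hchain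
  rw [dist_eq_length_of_isPath hT.isAcyclic hpath, SimpleGraph.Walk.length_append,
    SimpleGraph.Walk.length_cons, hw, hw']
  omega

theorem exists_adj_dist_eq_add_one (hT : T.Connected) {x y : V} (hne : x ≠ y) :
    ∃ x', T.Adj x x' ∧ T.dist x y = T.dist x' y + 1 := by
  obtain ⟨w, hw⟩ := hT.exists_walk_length_eq_dist x y
  cases w with
  | nil => exact absurd rfl hne
  | @cons _ x' _ hadj w' =>
    refine ⟨x', hadj, le_antisymm ?_ ?_⟩
    · calc T.dist x y ≤ T.dist x x' + T.dist x' y := hT.dist_triangle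
        _ = T.dist x' y + 1 := by rw [SimpleGraph.dist_eq_one_iff_adj.mpr hadj, add_comm]
    · rw [← hw, SimpleGraph.Walk.length_cons]
      exact Nat.add_le_add_right (SimpleGraph.dist_le w') 1

theorem four_point_condition (hT : T.IsTree) (x y z t : V) :
    T.dist x y + T.dist z t ≤ max (T.dist x z + T.dist y t) (T.dist x t + T.dist y z) := by
  induction hd : T.dist x y generalizing x with
  | zero =>
    obtain rfl := hT.connected.dist_eq_zero_iff.mp hd
    have := hT.connected.dist_triangle (u := z) (v := x) (w := t)
    have := T.dist_comm (u := z) (v := x)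
    omega
  | succ d ih =>
    obtain ⟨x', hadj, hx'⟩ := exists_adj_dist_eq_add_one hT.connected (x := x) (y := y) fun h => by
      rw [h, SimpleGraph.dist_self] at hd
      omega
    have := ih x' (by omega)
    have step : ∀ s, T.dist x s = T.dist x' s + 1 ∨ T.dist y s = T.dist x y + T.dist x s := by
      intro s
      have := T.dist_comm (u := x) (v := s)
      have := T.dist_comm (u := x') (v := s)
      have := T.dist_comm (u := y) (v := x)
      have := T.dist_comm (u := y) (v := x')
      refine (hT.dist_eq_dist_add_one_of_adj s hadj).imp (fun h => by omega) fun h => ?_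
      have := dist_across_edge hT hadj.symm (x := y) (z := s) (by omega) (by omega)
      omega
    have := hT.connected.dist_triangle (u := z) (v := x) (w := t)
    have := T.dist_comm (u := z) (v := x)
    rcases step z with hz | hz <;> rcases step t with ht | ht <;> omega

theorem intv_comm (T : SimpleGraph V) (a b : V) : intv T a b = intv T b a := by
  ext z
  change T.dist a z + T.dist z b = T.dist a b ↔ T.dist b z + T.dist z a = T.dist b a
  rw [T.dist_comm (u := b) (v := a), T.dist_comm (u := b), T.dist_comm (v := a), add_comm]

theorem left_mem_intv (T : SimpleGraph V) (a b : V) : a ∈ intv T a b := by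
  change T.dist a a + T.dist a b = T.dist a b
  rw [SimpleGraph.dist_self, zero_add]

theorem right_mem_intv (T : SimpleGraph V) (a b : V) : b ∈ intv T a b :=
  intv_comm T a b ▸ left_mem_intv T b a

theorem mem_sideSet_self (T : SimpleGraph V) (a b : V) : a ∈ sideSet T a b := left_mem_intv T a b

theorem mem_intv_trans (hT : T.Connected) {u x y : V} (ha : a ∈ intv T u x) (hy : y ∈ intv T a x) :
    y ∈ intv T u x := by
  have hux : T.dist u a + T.dist a x = T.dist u x := ha
  have hax : T.dist a y + T.dist y x = T.dist a x := hy
  change T.dist u y + T.dist y x = T.dist u x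
  have := hT.dist_triangle (u := u) (v := a) (w := y)
  have := hT.dist_triangle (u := u) (v := y) (w := x)
  omega

theorem dist_eq_sub_of_mem_intv (hT : T.IsTree) {x y : V} (hx : x ∈ intv T a b)
    (hy : y ∈ intv T a b) (hxy : T.dist a x ≤ T.dist a y) :
    T.dist x y = T.dist a y - T.dist a x := by
  have hxab : T.dist a x + T.dist x b = T.dist a b := hx
  have hyab : T.dist a y + T.dist y b = T.dist a b := hy
  have := four_point_condition hT a b x y
  have := hT.connected.dist_triangle (u := a) (v := x) (w := y)
  have := T.dist_comm (u := b) (v := x)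
  have := T.dist_comm (u := b) (v := y)
  omega

theorem notMem_sideSet_of_mem_sideSet (hT : T.IsTree) (hne : a ≠ b) {z : V}
    (hz : z ∈ sideSet T a b) : z ∉ sideSet T b a := by
  intro hz'
  have hzab : T.dist z a + T.dist a b = T.dist z b := hz
  have hzba : T.dist z b + T.dist b a = T.dist z a := hz'
  exact hne (hT.connected.dist_eq_zero_iff.mp (by omega))

variable [Fintype V]

theorem DualThresholds.swap (h : DualThresholds T a b) : DualThresholds T b a :=
  ⟨h.1.symm, intv_comm T a b ▸ fun c hc => (h.2 c hc).symm⟩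

theorem isProjPt_projOn {B : Set V} {c : V} (h : ∃ x, IsProjPt T B c x) :
    IsProjPt T B c (projOn T B c) := by
  rw [projOn, dif_pos h]
  exact h.choose_spec

theorem mem_intv_or_mem_sideSet (h : DualThresholds T a b) (c : V) :
    c ∈ intv T a b ∨ c ∈ sideSet T a b ∨ c ∈ sideSet T b a := by
  by_cases hc : c ∈ intv T a b
  · exact Or.inl hc
  have hproj := h.2 c hc
  by_cases hex : ∃ x, IsProjPt T (intv T a b) c x
  · rcases hproj with heq | heq <;> have hpt := heq ▸ isProjPt_projOn hex
    · exact Or.inr (Or.inl (hpt.2 b (right_mem_intv T a b)))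
    · exact Or.inr (Or.inr (hpt.2 a (left_mem_intv T a b)))
  · rw [projOn, dif_neg hex] at hproj
    rcases hproj with rfl | rfl
    · exact absurd (left_mem_intv T c b) hc
    · exact absurd (right_mem_intv T a c) hc

theorem mem_intv_of_notMem_sideSet (hT : T.IsTree) (hab : DualThresholds T a b) {u z : V}
    (hu : u ∉ sideSet T a b \ {a}) (hz : z ∈ sideSet T a b) : a ∈ intv T u z := by
  rcases eq_or_ne u a with rfl | hua
  · exact left_mem_intv T u z
  have hzab : T.dist z a + T.dist a b = T.dist z b := hz
  change T.dist u a + T.dist a z = T.dist u z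
  have := T.dist_comm (u := a) (v := z)
  have := T.dist_comm (u := a) (v := u)
  have := T.dist_comm (u := z) (v := u)
  rcases mem_intv_or_mem_sideSet hab u with huab | huab | huba
  · have huab' : T.dist a u + T.dist u b = T.dist a b := huab
    have := hT.connected.dist_triangle (u := z) (v := u) (w := b)
    have := hT.connected.dist_triangle (u := u) (v := a) (w := z)
    omega
  · exact absurd ⟨huab, hua⟩ hu
  · have huba' : T.dist u b + T.dist b a = T.dist u a := huba
    have hpos : T.dist a b ≠ 0 := fun h => hab.1 (hT.connected.dist_eq_zero_iff.mp h)
    have := four_point_condition hT u a z b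
    have := T.dist_comm (u := b) (v := a)
    have := hT.connected.dist_triangle (u := u) (v := a) (w := z)
    omega

end Trees

/-! ### Hybrid preferences on a tree -/

section Hybrid

variable {α : Type*} [Fintype α] [Nonempty α] {D : Set (Pref α)} {T : SimpleGraph α} {a b : α}
  {L U : Pref α} {p q : ℕ}

/-- All preferences of `D` are `(a, b)`-hybrid on the tree `T`: an `(a, b)`-hybrid domain without
connectedness and without the conditions on the size of the free zone. -/
structure HybridOn (D : Set (Pref α)) (T : SimpleGraph α) (a b : α) : Prop where
  isTree : T.IsTree
  dualThresholds : DualThresholds T a b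
  hybridPref : ∀ P ∈ D, HybridPref T a b P

namespace HybridOn

variable (h : HybridOn D T a b)
include h

theorem swap : HybridOn D T b a where
  isTree := h.isTree
  dualThresholds := DualThresholds.swap h.dualThresholds
  hybridPref P hP := by
    obtain ⟨hsp, hleft, hright⟩ := h.hybridPref P hP
    rw [intv_comm T a b] at hleft hright
    exact ⟨fun y z hyz => hsp y z hyz.symm, hright, hleft⟩

theorem pos_lt_of_mem_sideSet {P : Pref α} (hP : P ∈ D) {y z : α} (hy : y ∈ sideSet T a b)
    (hz : z ∈ sideSet T a b) (hne : y ≠ z) (hyz : y ∈ intv T (peak P) z) : pos P y < pos P z :=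
  (h.hybridPref P hP).1 y z (Or.inl ⟨hy, hz⟩) hne hyz

theorem pos_lt_of_mem_intv {P : Pref α} (hP : P ∈ D) (hpeak : peak P ∈ sideSet T a b \ {a}) {y : α}
    (hy : y ∈ intv T a b) (hne : y ≠ a) : pos P a < pos P y :=
  ((h.hybridPref P hP).2.1 hpeak).2 y hy hne

theorem pos_lt_of_notMem_sideSet {P : Pref α} (hP : P ∈ D) (hpeak : peak P ∈ sideSet T a b \ {a})
    {t : α} (ht : t ∉ sideSet T a b) : pos P a < pos P t := by
  have hab := h.dualThresholds
  rcases mem_intv_or_mem_sideSet hab t with htab | htab | htba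
  · exact h.pos_lt_of_mem_intv hP hpeak htab fun e => ht (e ▸ mem_sideSet_self T a b)
  · exact absurd htab ht
  · have hlt : pos P a < pos P b :=
      h.pos_lt_of_mem_intv hP hpeak (right_mem_intv T a b) hab.1.symm
    rcases eq_or_ne b t with rfl | htb
    · exact hlt
    have hpeak' : peak P ∉ sideSet T b a \ {b} := fun hmem =>
      notMem_sideSet_of_mem_sideSet h.isTree hab.1 hpeak.1 hmem.1
    exact hlt.trans <| h.swap.pos_lt_of_mem_sideSet hP (mem_sideSet_self T b a) htba htb
      (mem_intv_of_notMem_sideSet h.isTree (DualThresholds.swap hab) hpeak' htba)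

end HybridOn

/-- A set of `(a, b)`-hybrid preferences on `T` containing two completely reversed preferences
`L` and `U` such that only the peak of `L` lies strictly on the side of `a`. -/
structure HybridWing (D : Set (Pref α)) (T : SimpleGraph α) (a b : α) (L U : Pref α) : Prop
    extends HybridOn D T a b where
  left_mem : L ∈ D
  right_mem : U ∈ D
  reversed : Reversed L U
  left_peak : peak L ∈ sideSet T a b \ {a}
  right_peak : peak U ∉ sideSet T a b \ {a}

namespace HybridWing

variable (h : HybridWing D T a b L U)
include h

theorem pos_lt_of_mem_intv_left {x y : α} (hx : x ∈ sideSet T a b) (hy : y ∈ sideSet T a b)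
    (hne : y ≠ x) (hyx : y ∈ intv T a x) : pos L x < pos L y := by
  have hU : pos U y < pos U x := h.pos_lt_of_mem_sideSet h.right_mem hy hx hne <|
    mem_intv_trans h.isTree.connected
      (mem_intv_of_notMem_sideSet h.isTree h.dualThresholds h.right_peak hx) hyx
  have := Reversed.pos_add_pos h.reversed x
  have := Reversed.pos_add_pos h.reversed y
  omega

theorem pos_lt_left {x : α} (hx : x ∈ sideSet T a b \ {a}) : pos L x < pos L a :=
  h.pos_lt_of_mem_intv_left hx.1 (mem_sideSet_self T a b) (Ne.symm hx.2) (left_mem_intv T a x)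

theorem mem_sideSet_of_pos_le {x : α} (hx : pos L x ≤ pos L a) : x ∈ sideSet T a b := by
  by_contra hmem
  exact hx.not_gt (h.pos_lt_of_notMem_sideSet h.left_mem h.left_peak hmem)

theorem mem_intv_peak {x : α} (hx : x ∈ sideSet T a b) : x ∈ intv T (peak L) a := by
  induction hd : T.dist x a generalizing x with
  | zero => exact (h.isTree.connected.dist_eq_zero_iff.mp hd) ▸ right_mem_intv T _ _
  | succ d ih =>
    have hxa : x ≠ a := by
      rintro rfl
      rw [SimpleGraph.dist_self] at hd
      omega
    obtain ⟨y, hxy, hdist⟩ := exists_adj_dist_eq_add_one h.isTree.connected hxa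
    have hyx : T.dist y x = 1 := SimpleGraph.dist_eq_one_iff_adj.mpr hxy.symm
    have hy_intv : y ∈ intv T a x := by
      change T.dist a y + T.dist y x = T.dist a x
      rw [T.dist_comm (u := a) (v := y), T.dist_comm (u := a) (v := x), hyx, hdist]
    have hy : y ∈ sideSet T a b := by
      have hxab : T.dist x a + T.dist a b = T.dist x b := hx
      change T.dist y a + T.dist a b = T.dist y b
      have := h.isTree.connected.dist_triangle (u := x) (v := y) (w := b)
      have := h.isTree.connected.dist_triangle (u := y) (v := a) (w := b)
      have := T.dist_comm (u := y) (v := x)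
      omega
    have hya : T.dist (peak L) y + T.dist y a = T.dist (peak L) a := ih hy (by omega)
    change T.dist (peak L) x + T.dist x a = T.dist (peak L) a
    rcases h.isTree.dist_eq_dist_add_one_of_adj (peak L) hxy with hfar | hnear
    · have hL : pos L y < pos L x := h.pos_lt_of_mem_sideSet h.left_mem hy hx hxy.ne'
        (show T.dist (peak L) y + T.dist y x = T.dist (peak L) x by omega)
      exact absurd (h.pos_lt_of_mem_intv_left hx hy hxy.ne' hy_intv) hL.asymm
    · omega

theorem dist_eq_sub {x y : α} (hx : x ∈ sideSet T a b) (hy : y ∈ sideSet T a b)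
    (hxy : T.dist (peak L) x ≤ T.dist (peak L) y) :
    T.dist x y = T.dist (peak L) y - T.dist (peak L) x :=
  dist_eq_sub_of_mem_intv h.isTree (h.mem_intv_peak hx) (h.mem_intv_peak hy) hxy

theorem pos_lt_of_dist_lt {x y : α} (hx : x ∈ sideSet T a b) (hy : y ∈ sideSet T a b)
    (hxy : T.dist (peak L) x < T.dist (peak L) y) : pos L x < pos L y := by
  refine h.pos_lt_of_mem_sideSet h.left_mem hx hy (by rintro rfl; exact hxy.ne rfl) ?_
  change T.dist (peak L) x + T.dist x y = T.dist (peak L) y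
  rw [h.dist_eq_sub hx hy hxy.le, Nat.add_sub_cancel' hxy.le]

theorem dist_le_of_pos_le {x y : α} (hx : x ∈ sideSet T a b) (hy : y ∈ sideSet T a b)
    (hxy : pos L x ≤ pos L y) : T.dist (peak L) x ≤ T.dist (peak L) y :=
  le_of_not_gt fun hlt => hxy.not_gt (h.pos_lt_of_dist_lt hy hx hlt)

theorem mem_intv_of_pos_le {x y z : α} (hx : x ∈ sideSet T a b) (hy : y ∈ sideSet T a b)
    (hz : z ∈ sideSet T a b) (hxy : pos L x ≤ pos L y) (hyz : pos L y ≤ pos L z) :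
    y ∈ intv T x z := by
  have hdxy := h.dist_le_of_pos_le hx hy hxy
  have hdyz := h.dist_le_of_pos_le hy hz hyz
  change T.dist x y + T.dist y z = T.dist x z
  rw [h.dist_eq_sub hx hy hdxy, h.dist_eq_sub hy hz hdyz, h.dist_eq_sub hx hz (hdxy.trans hdyz)]
  omega

theorem singlePeakedUpTo {P : Pref α} (hP : P ∈ D) : SinglePeakedUpTo L (pos L a) P where
  toward x y hxy hya hpeak := by
    have hx := h.mem_sideSet_of_pos_le (hxy.le.trans hya)
    have hy := h.mem_sideSet_of_pos_le hya
    refine h.pos_lt_of_mem_sideSet hP hy hx (by rintro rfl; exact hxy.ne rfl) ?_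
    by_cases hmem : peak P ∈ sideSet T a b \ {a}
    · exact intv_comm T x (peak P) ▸ h.mem_intv_of_pos_le hx hy hmem.1 hxy.le hpeak
    · exact mem_intv_trans h.isTree.connected
        (mem_intv_of_notMem_sideSet h.isTree h.dualThresholds hmem hx)
        (intv_comm T x a ▸ h.mem_intv_of_pos_le hx hy (mem_sideSet_self T a b) hxy.le hya)
  away x y hxa hpeak hxy := by
    have hpeak_mem := h.mem_sideSet_of_pos_le (hpeak.trans hxa)
    have hx := h.mem_sideSet_of_pos_le hxa
    have away_side : ∀ z ∈ sideSet T a b, pos L x < pos L z → pos P x < pos P z := fun z hz hxz =>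
      h.pos_lt_of_mem_sideSet hP hx hz (by rintro rfl; exact hxz.ne rfl)
        (h.mem_intv_of_pos_le hpeak_mem hx hz hpeak hxz.le)
    by_cases hy : y ∈ sideSet T a b
    · exact away_side y hy hxy
    by_cases heq : peak P = a
    · have hxa' : x = a := pos_injective L (le_antisymm hxa (heq ▸ hpeak))
      exact pos_lt_of_peak_ne (heq.trans hxa'.symm) (by rintro rfl; exact hxy.ne rfl)
    have hay := h.pos_lt_of_notMem_sideSet hP ⟨hpeak_mem, heq⟩ hy
    rcases hxa.eq_or_lt with hxa | hxa
    · rwa [pos_injective L hxa]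
    · exact (away_side a (mem_sideSet_self T a b) hxa).trans hay

theorem notMem_freeZone (hp : ¬ ∀ P ∈ D, SinglePeakedUpTo L (p + 1) P) {z : α}
    (hz : z ∈ sideSet T a b \ {a}) : z ∉ freeZone L U p q := fun hzone =>
  hp fun _ hP => (h.singlePeakedUpTo hP).mono (hzone.1.trans_lt (h.pos_lt_left hz))

end HybridWing

namespace HybridOn

variable (h : HybridOn D T a b) (hL : L ∈ D) (hU : U ∈ D) (hLU : Reversed L U)
  (hp : ¬ ∀ P ∈ D, SinglePeakedUpTo L (p + 1) P) (hq : ¬ ∀ P ∈ D, SinglePeakedUpTo U (q + 1) P)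
include h hL hU hLU hp hq

theorem notMem_freeZone {z : α} (hz : z ∈ sideSet T a b \ {a}) : z ∉ freeZone L U p q := by
  have reversed_lt : ∀ {x y}, pos L x < pos L y → ¬ pos U x < pos U y := fun {x y} hxy => by
    have := Reversed.pos_add_pos hLU x
    have := Reversed.pos_add_pos hLU y
    omega
  by_cases hl : peak L ∈ sideSet T a b \ {a} <;> by_cases hu : peak U ∈ sideSet T a b \ {a}
  · have hba := h.dualThresholds.1.symm
    exact absurd (h.pos_lt_of_mem_intv hU hu (right_mem_intv T a b) hba)
      (reversed_lt (h.pos_lt_of_mem_intv hL hl (right_mem_intv T a b) hba))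
  · exact HybridWing.notMem_freeZone ⟨h, hL, hU, hLU, hl, hu⟩ hp hz
  · rw [freeZone_comm]
    exact HybridWing.notMem_freeZone ⟨h, hU, hL, Reversed.symm hLU, hu, hl⟩ hq hz
  · have a_first : ∀ P ∈ D, peak P ∉ sideSet T a b \ {a} → pos P a < pos P z := fun P hP hpeak =>
      h.pos_lt_of_mem_sideSet hP (mem_sideSet_self T a b) hz.1 (Ne.symm hz.2)
        (mem_intv_of_notMem_sideSet h.isTree h.dualThresholds hpeak hz.1)
    exact absurd (a_first U hU hu) (reversed_lt (a_first L hL hl))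

theorem freeZone_subset_intv : freeZone L U p q ⊆ intv T a b := by
  intro z hz
  by_contra hmem
  rcases mem_intv_or_mem_sideSet h.dualThresholds z with hz' | hz' | hz'
  · exact hmem hz'
  · exact h.notMem_freeZone hL hU hLU hp hq
      ⟨hz', fun (e : z = a) => hmem (e ▸ left_mem_intv T a b)⟩ hz
  · exact h.swap.notMem_freeZone hL hU hLU hp hq
      ⟨hz', fun (e : z = b) => hmem (e ▸ right_mem_intv T a b)⟩ hz

end HybridOn

end Hybrid

/-! ### Hybrid preferences on a line -/

section Line

variable {α : Type*} [Fintype α] [Nonempty α] {L U : Pref α} {a b x y z : α}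

theorem lineOf_adj : (lineOf L).Adj x y ↔ pos L x + 1 = pos L y ∨ pos L y + 1 = pos L x := by
  have succ_iff : ∀ x y, (∃ k, k + 1 < Fintype.card α ∧ rk L k = x ∧ rk L (k + 1) = y) ↔
      pos L x + 1 = pos L y := fun x y => by
    constructor
    · rintro ⟨k, hk, rfl, rfl⟩
      rw [pos_rk L (Nat.lt_of_succ_lt hk), pos_rk L hk]
    · intro hxy
      exact ⟨pos L x, hxy ▸ pos_lt_card L y, rk_pos L x, hxy ▸ rk_pos L y⟩
  rw [lineOf, SimpleGraph.fromRel_adj, succ_iff, succ_iff, and_iff_right_iff_imp]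
  rintro hxy rfl
  omega

theorem lineOf_eq_of_reversed (hLU : Reversed L U) : lineOf L = lineOf U := by
  ext x y
  have := Reversed.pos_add_pos hLU x
  have := Reversed.pos_add_pos hLU y
  rw [lineOf_adj, lineOf_adj]
  omega

theorem exists_walk_lineOf (L : Pref α) {x y : α} (hxy : pos L x ≤ pos L y) :
    ∃ w : (lineOf L).Walk x y, w.length = pos L y - pos L x := by
  induction hd : pos L y - pos L x generalizing y with
  | zero =>
    obtain rfl : x = y := pos_injective L (by omega)
    exact ⟨.nil, rfl⟩
  | succ d ih =>
    have hprev : pos L (rk L (pos L y - 1)) = pos L y - 1 :=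
      pos_rk L (by have := pos_lt_card L y; omega)
    obtain ⟨w, hw⟩ := ih (y := rk L (pos L y - 1)) (by omega) (by omega)
    exact ⟨w.concat (lineOf_adj.mpr (by omega)), by rw [SimpleGraph.Walk.length_concat, hw]⟩

theorem le_length_of_walk_lineOf (w : (lineOf L).Walk x y) :
    (pos L x - pos L y) + (pos L y - pos L x) ≤ w.length := by
  induction w with
  | nil => omega
  | cons hadj w ih =>
    rw [SimpleGraph.Walk.length_cons]
    have := lineOf_adj.mp hadj
    omega

theorem lineOf_connected (L : Pref α) : (lineOf L).Connected where
  preconnected x y := by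
    rcases le_total (pos L x) (pos L y) with hxy | hyx
    · exact (exists_walk_lineOf L hxy).choose.reachable
    · exact (exists_walk_lineOf L hyx).choose.reachable.symm

theorem dist_lineOf (L : Pref α) (x y : α) :
    (lineOf L).dist x y = (pos L x - pos L y) + (pos L y - pos L x) := by
  wlog hxy : pos L x ≤ pos L y generalizing x y
  · rw [(lineOf L).dist_comm, this y x (by omega), add_comm]
  obtain ⟨w, hw⟩ := exists_walk_lineOf L hxy
  obtain ⟨w', hw'⟩ := (lineOf_connected L).exists_walk_length_eq_dist x y
  have hle := SimpleGraph.dist_le w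
  have hge := le_length_of_walk_lineOf w'
  omega

theorem lineOf_isTree (L : Pref α) : (lineOf L).IsTree := by
  refine ⟨lineOf_connected L, SimpleGraph.isAcyclic_iff_forall_adj_isBridge.mpr ?_⟩
  have bridge : ∀ x y, pos L x + 1 = pos L y → (lineOf L).IsBridge s(x, y) := fun x y hxy => by
    rw [SimpleGraph.isBridge_iff]
    intro hreach
    have hle : pos L y ≤ pos L x := by
      refine reachable_induction hreach le_rfl fun u v huv hu => ?_
      rw [SimpleGraph.deleteEdges_adj, lineOf_adj] at huv
      by_contra hv
      obtain rfl : u = x := pos_injective L (by omega)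
      obtain rfl : v = y := pos_injective L (by omega)
      exact huv.2 rfl
    omega
  intro x y hxy
  rcases lineOf_adj.mp hxy with hxy | hyx
  · exact bridge x y hxy
  · exact Sym2.eq_swap ▸ bridge y x hyx

theorem mem_intv_lineOf : z ∈ intv (lineOf L) a b ↔
    (pos L a ≤ pos L z ∧ pos L z ≤ pos L b) ∨ (pos L b ≤ pos L z ∧ pos L z ≤ pos L a) := by
  change (lineOf L).dist a z + (lineOf L).dist z b = (lineOf L).dist a b ↔ _
  rw [dist_lineOf, dist_lineOf, dist_lineOf]
  omega

theorem mem_sideSet_lineOf (hab : pos L a < pos L b) :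
    z ∈ sideSet (lineOf L) a b ↔ pos L z ≤ pos L a := by
  change a ∈ intv (lineOf L) z b ↔ _
  rw [mem_intv_lineOf]
  omega

theorem intv_lineOf_eq_freeZone (hLU : Reversed L U) (hab : pos L a ≤ pos L b) :
    intv (lineOf L) a b = freeZone L U (pos L a) (pos U b) := by
  ext z
  have := Reversed.pos_add_pos hLU b
  have := Reversed.pos_add_pos hLU z
  change _ ↔ pos L a ≤ pos L z ∧ pos U b ≤ pos U z
  rw [mem_intv_lineOf]
  omega

theorem ncard_intv_lineOf (hab : pos L a ≤ pos L b) :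
    (intv (lineOf L) a b).ncard = pos L b + 1 - pos L a := by
  have himage : pos L '' intv (lineOf L) a b = Finset.Icc (pos L a) (pos L b) := by
    ext k
    rw [Finset.coe_Icc, Set.mem_Icc]
    constructor
    · rintro ⟨z, hz, rfl⟩
      rw [mem_intv_lineOf] at hz
      omega
    · intro hk
      have hpos : pos L (rk L k) = k := pos_rk L (hk.2.trans_lt (pos_lt_card L b))
      exact ⟨rk L k, mem_intv_lineOf.mpr (Or.inl (hpos.symm ▸ hk)), hpos⟩
  rw [← Set.ncard_image_of_injective _ (pos_injective L), himage, Set.ncard_coe_finset,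
    Nat.card_Icc]

theorem projOn_lineOf_eq (hx : IsProjPt (lineOf L) (intv (lineOf L) a b) z x) :
    projOn (lineOf L) (intv (lineOf L) a b) z = x := by
  have hproj := isProjPt_projOn ⟨x, hx⟩
  have hleft := hproj.2 x hx.1
  have hright := hx.2 _ hproj.1
  rw [mem_intv_lineOf] at hleft hright
  exact pos_injective L (by omega)

theorem dualThresholds_lineOf (hab : pos L a < pos L b) : DualThresholds (lineOf L) a b := by
  refine ⟨by rintro rfl; exact hab.ne rfl, fun z hz => ?_⟩
  rw [mem_intv_lineOf] at hz
  rcases lt_or_ge (pos L z) (pos L a) with hza | haz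
  · refine Or.inl (projOn_lineOf_eq ⟨left_mem_intv _ a b, fun y hy => ?_⟩)
    rw [mem_intv_lineOf] at hy ⊢
    omega
  · refine Or.inr (projOn_lineOf_eq ⟨right_mem_intv _ a b, fun y hy => ?_⟩)
    rw [mem_intv_lineOf] at hy ⊢
    omega

section OneSide

variable {P : Pref α} (hP : SinglePeakedUpTo L (pos L a) P) (hab : pos L a < pos L b)
include hP hab

theorem SinglePeakedUpTo.pos_lt_of_mem_intv (hy : y ∈ sideSet (lineOf L) a b)
    (hz : z ∈ sideSet (lineOf L) a b) (hne : y ≠ z) (hyz : y ∈ intv (lineOf L) (peak P) z) :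
    pos P y < pos P z := by
  rw [mem_sideSet_lineOf hab] at hy hz
  have hpos : pos L y ≠ pos L z := fun e => hne (pos_injective L e)
  rcases mem_intv_lineOf.mp hyz with ⟨hpeak, hle⟩ | ⟨hle, hpeak⟩
  · exact hP.away y z hy hpeak (hle.lt_of_ne hpos)
  · exact hP.toward z y (hle.lt_of_ne hpos.symm) hy hpeak

theorem SinglePeakedUpTo.isBestOf (hpeak : peak P ∈ sideSet (lineOf L) a b) :
    IsBestOf P a (intv (lineOf L) a b) := by
  refine ⟨left_mem_intv _ a b, fun y hy hne => ?_⟩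
  rw [mem_sideSet_lineOf hab] at hpeak
  have hpos : pos L a ≠ pos L y := fun e => hne (pos_injective L e).symm
  rw [mem_intv_lineOf] at hy
  exact hP.away a y le_rfl hpeak (by omega)

end OneSide

theorem hybridPref_lineOf (hLU : Reversed L U) (hab : pos L a < pos L b) {P : Pref α}
    (hPL : SinglePeakedUpTo L (pos L a) P) (hPU : SinglePeakedUpTo U (pos U b) P) :
    HybridPref (lineOf L) a b P := by
  have hba : pos U b < pos U a := by
    have := Reversed.pos_add_pos hLU a
    have := Reversed.pos_add_pos hLU b
    omega
  refine ⟨fun y z hyz hne hmem => ?_, fun hpeak => hPL.isBestOf hab hpeak.1, ?_⟩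
  · rcases hyz with ⟨hy, hz⟩ | ⟨hy, hz⟩
    · exact hPL.pos_lt_of_mem_intv hab hy hz hne hmem
    · rw [lineOf_eq_of_reversed hLU] at hy hz hmem
      exact hPU.pos_lt_of_mem_intv hba hy hz hne hmem
  · rw [lineOf_eq_of_reversed hLU, intv_comm]
    exact fun hpeak => hPU.isBestOf hba hpeak.1

theorem HybridOn.singlePeakedUpTo_lineOf {D : Set (Pref α)} (h : HybridOn D (lineOf L) a b)
    (hL : L ∈ D) (hU : U ∈ D) (hLU : Reversed L U) (hab : pos L a < pos L b) {P : Pref α}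
    (hP : P ∈ D) : SinglePeakedUpTo L (pos L a) P := by
  have hpeakL := pos_peak L
  rcases Nat.eq_zero_or_pos (pos L a) with ha | ha
  · exact ha ▸ singlePeakedUpTo_zero L P
  · refine HybridWing.singlePeakedUpTo ⟨h, hL, hU, hLU, ⟨?_, ?_⟩, fun hpeak => ?_⟩ hP
    · rw [mem_sideSet_lineOf hab]
      omega
    · rintro (rfl : peak L = a)
      omega
    · have hpeakU := pos_peak U
      have := (mem_sideSet_lineOf hab).mp hpeak.1
      have := Reversed.pos_add_pos hLU (peak U)
      have := pos_lt_card L b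
      omega

end Line

/-! ### Hybrid domains on a line -/

section MaximalEnds

variable {α : Type*} [Fintype α] [Nonempty α] {D : Set (Pref α)} {L U : Pref α} {a b : α} {p q : ℕ}

/-- Single-peakedness at the two ends of the line cannot be extended on either side. -/
structure MaximalEnds (D : Set (Pref α)) (L U : Pref α) (p q : ℕ) : Prop
    extends SinglePeakedEnds D L U p q where
  left_maximal : ¬ ∀ P ∈ D, SinglePeakedUpTo L (p + 1) P
  right_maximal : ¬ ∀ P ∈ D, SinglePeakedUpTo U (q + 1) P

theorem hybridDomainOn_swap {T : SimpleGraph α} (h : HybridDomainOn D T a b) :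
    HybridDomainOn D T b a := by
  obtain ⟨hT, hab, hD, hG, hmin, hcard⟩ := h
  have hswap := HybridOn.swap ⟨hT, hab, hD⟩
  rw [intv_comm] at hmin hcard
  exact ⟨hT, hswap.dualThresholds, hswap.hybridPref, hG, hmin, hcard⟩

section HybridLine

variable (h : HybridDomainOn D (lineOf L) a b) (hL : L ∈ D) (hU : U ∈ D) (hLU : Reversed L U)
include h hL hU hLU

theorem forall_singlePeakedUpTo_of_hybridDomainOn (hab : pos L a < pos L b) :
    (∀ P ∈ D, SinglePeakedUpTo L (pos L a) P) ∧ ∀ P ∈ D, SinglePeakedUpTo U (pos U b) P := by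
  have hD : HybridOn D (lineOf L) a b := ⟨h.1, h.2.1, h.2.2.1⟩
  have hba : pos U b < pos U a := by
    have := Reversed.pos_add_pos hLU a
    have := Reversed.pos_add_pos hLU b
    omega
  have hD' : HybridOn D (lineOf U) b a := lineOf_eq_of_reversed hLU ▸ hD.swap
  exact ⟨fun _ => hD.singlePeakedUpTo_lineOf hL hU hLU hab,
    fun _ => hD'.singlePeakedUpTo_lineOf hU hL (Reversed.symm hLU) hba⟩

theorem not_forall_singlePeakedUpTo_succ (hab : pos L a < pos L b) :
    ¬ ∀ P ∈ D, SinglePeakedUpTo L (pos L a + 1) P := by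
  intro hsucc
  have hright := (forall_singlePeakedUpTo_of_hybridDomainOn h hL hU hLU hab).2
  obtain ⟨-, -, -, -, hmin, hcard⟩ := h
  rw [ncard_intv_lineOf hab.le] at hcard
  have := pos_lt_card L b
  have hc : pos L (rk L (pos L a + 1)) = pos L a + 1 := pos_rk L (by omega)
  have hcb : pos L (rk L (pos L a + 1)) < pos L b := by omega
  refine hmin ⟨lineOf L, rk L (pos L a + 1), b, lineOf_isTree L, dualThresholds_lineOf hcb,
    fun P hP => hybridPref_lineOf hLU hcb (hc.symm ▸ hsucc P hP) (hright P hP),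
    fun z hz => ?_, fun hsub => ?_⟩
  · rw [mem_intv_lineOf] at hz ⊢
    omega
  · have ha := hsub (left_mem_intv _ a b)
    rw [mem_intv_lineOf] at ha
    omega

theorem maximalEnds_of_hybridDomainOn (hab : pos L a < pos L b) :
    MaximalEnds D L U (pos L a) (pos U b) := by
  obtain ⟨hleft, hright⟩ := forall_singlePeakedUpTo_of_hybridDomainOn h hL hU hLU hab
  have hcard := h.2.2.2.2.2
  rw [ncard_intv_lineOf hab.le] at hcard
  have ha := Reversed.pos_add_pos hLU a
  have hb := Reversed.pos_add_pos hLU b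
  have hswap : HybridDomainOn D (lineOf U) b a :=
    lineOf_eq_of_reversed hLU ▸ hybridDomainOn_swap h
  exact ⟨⟨h.2.2.2.1, hL, hU, hLU, hleft, hright, by omega⟩,
    not_forall_singlePeakedUpTo_succ h hL hU hLU hab,
    not_forall_singlePeakedUpTo_succ hswap hU hL (Reversed.symm hLU) (by omega)⟩

end HybridLine

theorem MaximalEnds.hybridDomainOn (h : MaximalEnds D L U (pos L a) (pos U b)) :
    HybridDomainOn D (lineOf L) a b := by
  have hcard := h.add_le_card
  have hb := h.pos_add_pos b
  have hab : pos L a < pos L b := by omega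
  refine ⟨lineOf_isTree L, dualThresholds_lineOf hab,
    fun P hP => hybridPref_lineOf h.reversed hab (h.left P hP) (h.right P hP), h.connected, ?_, ?_⟩
  · rintro ⟨T, a', b', hT, hab', hD, hss⟩
    rw [intv_lineOf_eq_freeZone h.reversed hab.le] at hss
    exact hss.2 <| HybridOn.freeZone_subset_intv ⟨hT, hab', hD⟩ h.left_mem h.right_mem h.reversed
      h.left_maximal h.right_maximal
  · rw [ncard_intv_lineOf hab.le]
    omega

theorem exists_maximalEnds (hG : PathConnectedDom D) (hL : L ∈ D) (hU : U ∈ D)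
    (hLU : Reversed L U) (hbound : ∀ p q, (∀ P ∈ D, SinglePeakedUpTo L p P) →
      (∀ P ∈ D, SinglePeakedUpTo U q P) → p + q + 3 ≤ Fintype.card α) :
    ∃ p q, MaximalEnds D L U p q := by
  have exists_maximal : ∀ R : Pref α, (¬ ∀ P ∈ D, SinglePeakedUpTo R (Fintype.card α) P) →
      ∃ k, (∀ P ∈ D, SinglePeakedUpTo R k P) ∧ ¬ ∀ P ∈ D, SinglePeakedUpTo R (k + 1) P :=
    fun R hR => by
      obtain ⟨k, hk, hk'⟩ := Nat.exists_not_and_succ_of_not_zero_of_exists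
        (p := fun k => ¬ ∀ P ∈ D, SinglePeakedUpTo R k P)
        (not_not_intro fun P _ => singlePeakedUpTo_zero R P) ⟨_, hR⟩
      exact ⟨k, not_not.mp hk, hk'⟩
  obtain ⟨p, hp, hp'⟩ := exists_maximal L fun hleft => by
    have := hbound _ 0 hleft fun P _ => singlePeakedUpTo_zero U P
    omega
  obtain ⟨q, hq, hq'⟩ := exists_maximal U fun hright => by
    have := hbound 0 _ (fun P _ => singlePeakedUpTo_zero L P) hright
    omega
  exact ⟨p, q, ⟨hG, hL, hU, hLU, hp, hq, hbound p q hp hq⟩, hp', hq'⟩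

namespace MaximalEnds

variable (h : MaximalEnds D L U p q)
include h

theorem dictatorOn (htod : TopsOnlyDomain D) {n : ℕ} (hn : 2 ≤ n) {f : (Fin n → Pref α) → α}
    (hrule : IsRule D f) (hsp : StrategyProof D f) : DictatorOn D f (freeZone L U p q) :=
  dictatorOn_of_twoVoterDictatorial (minimallyRich_of_pathConnected h.connected ⟨L, h.left_mem⟩)
    h.connectedOn_freeZone h.nontrivial_freeZone
    (fun _ => h.eq_left_or_eq_right htod h.left_maximal h.right_maximal)
    hrule hsp (htod n hn f hrule hsp)

theorem not_anonymous (htod : TopsOnlyDomain D) {n : ℕ} (hn : 2 ≤ n)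
    {f : (Fin n → Pref α) → α} (hrule : IsRule D f) (hsp : StrategyProof D f) :
    ¬ Anonymous D f :=
  not_anonymous_of_dictatorOn (minimallyRich_of_pathConnected h.connected ⟨L, h.left_mem⟩)
    h.nontrivial_freeZone hn (h.dictatorOn htod hn hrule hsp)

theorem add_pos (htod : TopsOnlyDomain D) (hnd : ¬ DictatorialDomain D) : 0 < p + q := by
  by_contra hzero
  obtain ⟨rfl, rfl⟩ : p = 0 ∧ q = 0 := by omega
  have hzone : freeZone L U 0 0 = Set.univ :=
    Set.eq_univ_of_forall fun _ => ⟨Nat.zero_le _, Nat.zero_le _⟩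
  exact hnd fun n hn f hrule hsp => (hzone ▸ h.dictatorOn htod hn hrule hsp :
    DictatorOn D f Set.univ)

theorem hybridDomainOn_rk :
    HybridDomainOn D (lineOf L) (rk L p) (rk L (Fintype.card α - 1 - q)) := by
  have hcard := h.add_le_card
  have hb : pos L (rk L (Fintype.card α - 1 - q)) = Fintype.card α - 1 - q := pos_rk L (by omega)
  have hsum := h.pos_add_pos (rk L (Fintype.card α - 1 - q))
  have hbU : pos U (rk L (Fintype.card α - 1 - q)) = q := by omega
  exact MaximalEnds.hybridDomainOn (by rwa [h.pos_rk_left, hbU])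

end MaximalEnds

end MaximalEnds

/-! ### The leftmost peak -/

section LeftmostPeak

variable {α : Type*} [Fintype α] [Nonempty α] {D : Set (Pref α)} {L U : Pref α} {n : ℕ}

/-- The rule that selects the leftmost of all peaks with respect to `L`. -/
noncomputable def leftmostPeak (L : Pref α) (P : Fin n → Pref α) : α :=
  rk L (⨅ i, pos L (peak (P i)))

theorem anonymous_leftmostPeak (D : Set (Pref α)) (L : Pref α) :
    Anonymous D (leftmostPeak L (n := n)) := fun P _ σ =>
  congrArg (rk L) (σ.iInf_comp (g := fun i => pos L (peak (P i))))

theorem pos_leftmostPeak_le (L : Pref α) (P : Fin n → Pref α) (i : Fin n) :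
    pos L (leftmostPeak L P) ≤ pos L (peak (P i)) := by
  have hle : ⨅ i, pos L (peak (P i)) ≤ pos L (peak (P i)) := ciInf_le (OrderBot.bddBelow _) i
  rwa [leftmostPeak, pos_rk L (hle.trans_lt (pos_lt_card L _))]

variable [Nonempty (Fin n)]

theorem exists_leftmostPeak_eq (L : Pref α) (P : Fin n → Pref α) :
    ∃ i, leftmostPeak L P = peak (P i) := by
  obtain ⟨i, hi⟩ := exists_eq_ciInf_of_finite (f := fun i => pos L (peak (P i)))
  exact ⟨i, by rw [leftmostPeak, ← hi, rk_pos]⟩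

theorem isRule_leftmostPeak (D : Set (Pref α)) (L : Pref α) :
    IsRule D (leftmostPeak L (n := n)) := by
  intro P _ a ha
  obtain ⟨i, hi⟩ := exists_leftmostPeak_eq L P
  exact hi.trans (ha i)

theorem strategyProof_leftmostPeak {p q : ℕ} (hLU : Reversed L U)
    (hL : ∀ P ∈ D, SinglePeakedUpTo L p P) (hU : ∀ P ∈ D, SinglePeakedUpTo U q P)
    (hcard : Fintype.card α < p + q + 3) : StrategyProof D (leftmostPeak L (n := n)) := by
  rw [strategyProof_iff]
  intro P hP i Q _
  set x := leftmostPeak L P with hx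
  set y := leftmostPeak L (Function.update P i Q)
  have hxi : pos L x ≤ pos L (peak (P i)) := pos_leftmostPeak_le L P i
  rcases lt_trichotomy (pos L y) (pos L x) with hlt | heq | hgt
  · have hxU := Reversed.pos_add_pos hLU x
    have hyU := Reversed.pos_add_pos hLU y
    have hiU := Reversed.pos_add_pos hLU (peak (P i))
    rcases le_or_gt (pos L x) p with hxp | hpx
    · exact ((hL (P i) (hP i)).toward y x hlt hxp hxi).le
    · exact ((hU (P i) (hP i)).away x y (by omega) (by omega) (by omega)).le
  · rw [pos_injective L heq]
  · obtain ⟨j, hj⟩ := exists_leftmostPeak_eq L P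
    obtain rfl : j = i := by
      by_contra hji
      have hyj := pos_leftmostPeak_le L (Function.update P i Q) j
      rw [Function.update_of_ne hji, ← hj] at hyj
      exact hyj.not_gt hgt
    rw [hx, hj, pos_peak]
    exact Nat.zero_le _

theorem exists_anonymous_rule {p q : ℕ} (hLU : Reversed L U)
    (hL : ∀ P ∈ D, SinglePeakedUpTo L p P) (hU : ∀ P ∈ D, SinglePeakedUpTo U q P)
    (hcard : Fintype.card α < p + q + 3) :
    ∃ f : (Fin n → Pref α) → α, IsRule D f ∧ StrategyProof D f ∧ Anonymous D f :=
  ⟨leftmostPeak L, isRule_leftmostPeak D L, strategyProof_leftmostPeak hLU hL hU hcard,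
    anonymous_leftmostPeak D L⟩

end LeftmostPeak

end SocialChoice

theorem stmt12_topsonly_hybrid_general {α : Type*} [Fintype α] [Nonempty α]
    (D : Set (Pref α)) (hG : PathConnectedDom D) (hdiv : Diversity D)
    (hnd : ¬ DictatorialDomain D) (htod : TopsOnlyDomain D) (n : ℕ) (hn : 2 ≤ n) :
    (¬ ∃ f : (Fin n → Pref α) → α, IsRule D f ∧ StrategyProof D f ∧ Anonymous D f) ↔
    (∃ Pl ∈ D, ∃ Pu ∈ D, Reversed Pl Pu ∧
      ∃ p q : ℕ, p < q ∧ q < Fintype.card α ∧ 1 < q - p ∧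
        q - p < Fintype.card α - 1 ∧
        HybridDomainOn D (lineOf Pl) (rk Pl p) (rk Pl q)) := by
  constructor
  · intro hno
    obtain ⟨L, hL, U, hU, hLU⟩ := hdiv
    have : NeZero n := ⟨by omega⟩
    obtain ⟨p, q, hends⟩ := SocialChoice.exists_maximalEnds hG hL hU hLU fun p q hp hq =>
      not_lt.mp fun hcard => hno (SocialChoice.exists_anonymous_rule hLU hp hq hcard)
    have hpq := hends.add_pos htod hnd
    have hcard := hends.add_le_card
    exact ⟨L, hL, U, hU, hLU, p, Fintype.card α - 1 - q, by omega, by omega, by omega, by omega,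
      hends.hybridDomainOn_rk⟩
  · rintro ⟨L, hL, U, hU, hLU, p, q, hpq, hq, -, -, hhybrid⟩ ⟨f, hrule, hsp, hanon⟩
    have hpos : SocialChoice.pos L (rk L p) < SocialChoice.pos L (rk L q) := by
      rwa [SocialChoice.pos_rk L (hpq.trans hq), SocialChoice.pos_rk L hq]
    have hends := SocialChoice.maximalEnds_of_hybridDomainOn hhybrid hL hU hLU hpos
    exact hends.not_anonymous htod hn hrule hsp hanon

/-- a non-dictatorial, tops-only, unidimensional domain admits no
anonymous and strategy-proof rule iff it is a non-degenerate hybrid domain on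
the line `L^A`, i.e. an `(a_p, a_q)`-hybrid domain on `L^A` for some indices
`p < q` with `1 < q − p < m − 1`. -/
theorem stmt12_topsonly_hybrid (D : Set (Pref A)) (hD : D.Nonempty)
    (hcard : 3 ≤ Fintype.card A) (huni : Unidimensional D)
    (hnd : ¬ DictatorialDomain D) (htod : TopsOnlyDomain D)
    (n : ℕ) (hn : 2 ≤ n) :
    (¬ ∃ f : (Fin n → Pref A) → A, IsRule D f ∧ StrategyProof D f ∧ Anonymous D f) ↔
    (∃ Pl ∈ D, ∃ Pu ∈ D, Reversed Pl Pu ∧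
      ∃ p q : ℕ, p < q ∧ q < Fintype.card A ∧ 1 < q - p ∧
        q - p < Fintype.card A - 1 ∧
        HybridDomainOn D (lineOf Pl) (rk Pl p) (rk Pl q)) := by
  exact stmt12_topsonly_hybrid_general D huni.1 huni.2.1 hnd htod n hn
end

section
/- Fix two voters N = {1, 2}, a path-connected domain D and a strategy-proof rule f : D^2 → A. Let π = (x_1, …, x_v) with v ≥ 3 be a path in the adjacency graph G_∼, and suppose D contains a preference with peak x_1 and second-ranked alternative x_v and a preference with peak x_v and second-ranked alternative x_1. Then f behaves like a dictatorship on {x_1, …, x_v}. -/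
open Classical

variable {A : Type*} [Fintype A] [DecidableEq A] [Nonempty A]

/-!
Say that voter `i` decides for `a` against `b` if the outcome is `a` whenever `i` has peak `a` and
the other voter has peak `b`. Suppose that each of `a` and `b` is ranked second in some preference
whose peak is the other. Then a single such profile with outcome `a` is enough, and a voter who
decides for `a` against `b` and for `b` against `c` decides for `a` against `c`. The engine is a
propagation step: if moreover `b` and `c` are adjacent and `c ≠ a`, then deciding for `a` against
`b` implies deciding for `b` against `c`, because swapping the two top alternatives `b`, `c` of the
other voter cannot move the outcome away from `a`.

The path together with the link between its endpoints is a cycle. Strategy-proofness makes one of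
the voters decide for one endpoint against the other. Going once around the cycle, that voter
decides in one direction along the path, which includes the opposite decision at the endpoints;
starting again from there gives the other direction.
-/

section Preferences

variable {α : Type*} [Fintype α] [Nonempty α]

theorem rk_symm_apply (V : Pref α) (c : α) : rk V (V.symm c) = c := by
  simp only [rk, Fin.is_lt, dif_pos, Fin.eta, Equiv.apply_symm_apply]

theorem symm_rk_apply (V : Pref α) {k : ℕ} (hk : k < Fintype.card α) :
    (V.symm (rk V k) : ℕ) = k := by
  simp only [rk, dif_pos hk, Equiv.symm_apply_apply]

theorem not_prefers_peak (V : Pref α) (c : α) : ¬ prefers V c (peak V) := by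
  rw [prefers, Fin.lt_def, peak, symm_rk_apply V Fintype.card_pos]
  exact Nat.not_lt_zero _

theorem eq_peak_of_prefers_second {V : Pref α} {c : α}
    (h : prefers V c (second V)) : c = peak V := by
  suffices h0 : (V.symm c : ℕ) = 0 by rw [peak, ← h0, rk_symm_apply]
  by_contra hpos
  have hcard : 1 < Fintype.card α := by omega
  rw [prefers, Fin.lt_def, second, symm_rk_apply V hcard] at h
  omega

theorem two_le_symm_of_ne {V : Pref α} {c : α} (hpeak : c ≠ peak V)
    (hsecond : c ≠ second V) : 2 ≤ (V.symm c : ℕ) := by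
  have h0 : (V.symm c : ℕ) ≠ 0 := fun h => hpeak (by rw [peak, ← h, rk_symm_apply])
  have h1 : (V.symm c : ℕ) ≠ 1 := fun h => hsecond (by rw [second, ← h, rk_symm_apply])
  omega

theorem symm_eq_of_rk_eq {V W : Pref α} {c : α}
    (h : rk V (V.symm c) = rk W (V.symm c)) : V.symm c = W.symm c := by
  apply Fin.ext
  rw [rk_symm_apply] at h
  conv_rhs => rw [h, symm_rk_apply W (V.symm c).isLt]

end Preferences

namespace StrategyProof

variable {α : Type*} [Fintype α] {D : Set (Pref α)} {n : ℕ} {f : (Fin n → Pref α) → α}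
  {S : Fin n → Pref α} {i : Fin n} {V W : Pref α} {a b : α}

theorem update_eq_or_prefers (hsp : StrategyProof D f) (hS : InDom D S) (i : Fin n)
    (hV : V ∈ D) (hW : W ∈ D) :
    f (Function.update S i V) = f (Function.update S i W) ∨
      prefers V (f (Function.update S i V)) (f (Function.update S i W)) := by
  have hSV : InDom D (Function.update S i V) :=
    (Function.forall_update_iff S fun _ U => U ∈ D).mpr ⟨hV, fun j _ => hS j⟩
  simpa only [Function.update_idem, Function.update_self] using hsp _ hSV i W hW

theorem update_eq_of_peak_eq [Nonempty α] (hsp : StrategyProof D f) (hS : InDom D S) (hV : V ∈ D)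
    (hW : W ∈ D) (ha : peak V = a) (h : f (Function.update S i W) = a) :
    f (Function.update S i V) = a := by
  have hVW := hsp.update_eq_or_prefers hS i hV hW
  rw [h] at hVW
  exact hVW.resolve_right (ha ▸ not_prefers_peak V _)

theorem update_eq_peak_or_second [Nonempty α] (hsp : StrategyProof D f) (hS : InDom D S)
    (hV : V ∈ D) (hW : W ∈ D) (ha : peak V = a) (hb : second V = b)
    (h : f (Function.update S i W) = b) :
    f (Function.update S i V) = a ∨ f (Function.update S i V) = b := by
  have hVW := hsp.update_eq_or_prefers hS i hV hW
  rw [h] at hVW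
  exact hVW.symm.imp_left fun hpref => ha ▸ eq_peak_of_prefers_second (hb ▸ hpref)

theorem update_eq_of_rk_eq [Nonempty α] (hsp : StrategyProof D f) (hS : InDom D S)
    (hV : V ∈ D) (hW : W ∈ D) (hVW : ∀ k, 2 ≤ k → rk V k = rk W k)
    (hpeak : f (Function.update S i V) ≠ peak V)
    (hsecond : f (Function.update S i V) ≠ second V) :
    f (Function.update S i W) = f (Function.update S i V) := by
  set c := f (Function.update S i V)
  set d := f (Function.update S i W)
  have hc : 2 ≤ (V.symm c : ℕ) := two_le_symm_of_ne hpeak hsecond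
  rcases hsp.update_eq_or_prefers hS i hV hW with hcd | hcd
  · exact hcd.symm
  rcases hsp.update_eq_or_prefers hS i hW hV with hdc | hdc
  · exact hdc
  have hd : 2 ≤ (V.symm d : ℕ) := hc.trans (Fin.lt_def.mp hcd).le
  rw [prefers, ← symm_eq_of_rk_eq (hVW _ hc), ← symm_eq_of_rk_eq (hVW _ hd)] at hdc
  exact absurd hdc (lt_asymm hcd)

end StrategyProof

section AdjacencyGraphs

variable {α : Type*} [Fintype α] [Nonempty α] {D : Set (Pref α)} {a b : α}

theorem DomAdjacent.symm (h : DomAdjacent D a b) : DomAdjacent D b a := by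
  obtain ⟨V, hV, W, hW, hVa, hVb, hWb, hWa, hVW⟩ := h
  exact ⟨W, hW, V, hV, hWb, hWa, hVa, hVb, fun k hk => (hVW k hk).symm⟩

theorem domAdjacent_of_adj (h : (adjGraph D).Adj a b) : DomAdjacent D a b :=
  ((SimpleGraph.fromRel_adj _ _ _).mp h).2.elim id DomAdjacent.symm

/-- The graph joining two alternatives when each is second-ranked in some preference of `D` whose
peak is the other. It contains the adjacency graph and also records the link between the endpoints
of a path that closes it up to a cycle. -/
def secondsGraph (D : Set (Pref α)) : SimpleGraph α where
  Adj a b := a ≠ b ∧ b ∈ secondsSet D a ∧ a ∈ secondsSet D b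
  symm := ⟨fun _ _ h => ⟨h.1.symm, h.2.symm⟩⟩
  loopless := ⟨fun _ h => h.1 rfl⟩

theorem adjGraph_le_secondsGraph (D : Set (Pref α)) : adjGraph D ≤ secondsGraph D := by
  intro a b hab
  obtain ⟨V, hV, W, hW, hVa, hVb, hWb, hWa, _⟩ := domAdjacent_of_adj hab
  exact ⟨hab.ne, ⟨V, hV, hVa, hVb⟩, ⟨W, hW, hWb, hWa⟩⟩

/-- `l` lists the vertices of a path from `a` to `b` in the adjacency graph that has at least three
vertices and is closed up to a cycle by an edge of `secondsGraph D` between `a` and `b`. -/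
structure IsLinkedPath (D : Set (Pref α)) (l : List α) (a b : α) : Prop where
  isChain : l.IsChain (adjGraph D).Adj
  nodup : l.Nodup
  three_le_length : 3 ≤ l.length
  head?_eq : l.head? = some a
  getLast?_eq : l.getLast? = some b
  adj : (secondsGraph D).Adj a b

theorem IsLinkedPath.reverse {l : List α} (hl : IsLinkedPath D l a b) :
    IsLinkedPath D l.reverse b a where
  isChain := List.isChain_reverse.mpr (hl.isChain.imp fun _ _ => SimpleGraph.Adj.symm)
  nodup := List.nodup_reverse.mpr hl.nodup
  three_le_length := l.length_reverse ▸ hl.three_le_length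
  head?_eq := l.head?_reverse.trans hl.getLast?_eq
  getLast?_eq := l.getLast?_reverse.trans hl.head?_eq
  adj := hl.adj.symm

theorem isLinkedPath_ofFn {v : ℕ} {x : Fin v → α} (hpath : IsPathIn (adjGraph D) x)
    (hv : 3 ≤ v) (hfirst : x ⟨v - 1, by omega⟩ ∈ secondsSet D (x ⟨0, by omega⟩))
    (hlast : x ⟨0, by omega⟩ ∈ secondsSet D (x ⟨v - 1, by omega⟩)) :
    IsLinkedPath D (List.ofFn x) (x ⟨0, by omega⟩) (x ⟨v - 1, by omega⟩) where
  isChain := List.isChain_ofFn.mpr hpath.2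
  nodup := List.nodup_ofFn.mpr hpath.1
  three_le_length := by rwa [List.length_ofFn]
  head?_eq := by
    rw [List.head?_eq_getElem?, List.getElem?_ofFn, dif_pos]
  getLast?_eq := by
    simp only [List.getLast?_eq_getElem?, List.length_ofFn, List.getElem?_ofFn]
    rw [dif_pos]
  adj := by
    refine ⟨hpath.1.ne fun e => ?_, hfirst, hlast⟩
    have : 0 = v - 1 := Fin.val_eq_of_eq e
    omega

end AdjacencyGraphs

section TwoVoters

variable {α : Type*} [Fintype α]

theorem prof2_eq_update_rev (i : Fin 2) (V T : Pref α) :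
    prof2 i V T = Function.update (fun _ => V) i.rev T := by
  funext j
  fin_cases i <;> fin_cases j <;> rfl

theorem prof2_rev (i : Fin 2) (V T : Pref α) : prof2 i.rev V T = prof2 i T V := by
  rw [prof2_eq_update_rev i, prof2]

theorem prof2_self_rev (i : Fin 2) (S : Fin 2 → Pref α) : prof2 i (S i) (S i.rev) = S := by
  funext j
  fin_cases i <;> fin_cases j <;> rfl

variable [Nonempty α] {D : Set (Pref α)} {f : (Fin 2 → Pref α) → α} {i : Fin 2} {a b c : α}
  {V T W : Pref α}

theorem IsRule.prof2_eq (hrule : IsRule D f) (hV : V ∈ D) (hT : T ∈ D) (hVa : peak V = a)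
    (hTa : peak T = a) : f (prof2 i V T) = a :=
  hrule _ ((Function.forall_update_iff _ fun _ U => U ∈ D).mpr ⟨hV, fun _ _ => hT⟩) a <|
    (Function.forall_update_iff _ fun _ U => peak U = a).mpr ⟨hVa, fun _ _ => hTa⟩

theorem StrategyProof.prof2_eq_of_peak_eq_rev (hsp : StrategyProof D f) (hV : V ∈ D) (hT : T ∈ D)
    (hW : W ∈ D) (ha : peak T = a) (h : f (prof2 i V W) = a) : f (prof2 i V T) = a := by
  rw [prof2_eq_update_rev] at h ⊢
  exact hsp.update_eq_of_peak_eq (fun _ => hV) hT hW ha h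

/-- Voter `i` decides for `a` against `b`: the outcome is `a` whenever `i` has peak `a` and the
other voter has peak `b`. -/
def Decides (D : Set (Pref α)) (f : (Fin 2 → Pref α) → α) (i : Fin 2) (a b : α) : Prop :=
  ∀ V ∈ D, ∀ T ∈ D, peak V = a → peak T = b → f (prof2 i V T) = a

theorem IsRule.decides_self (hrule : IsRule D f) (i : Fin 2) (a : α) : Decides D f i a a :=
  fun _ hV _ hT hVa hTa => hrule.prof2_eq hV hT hVa hTa

theorem dictatorOn_of_decides {B : Set α} (h : ∀ a ∈ B, ∀ b ∈ B, Decides D f i a b) :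
    DictatorOn D f B := by
  refine ⟨i, fun S hS hB => ?_⟩
  have hi := h _ (hB i) _ (hB i.rev) (S i) (hS i) (S i.rev) (hS i.rev) rfl rfl
  rwa [prof2_self_rev] at hi

theorem decides_of_prof2_eq (hrule : IsRule D f) (hsp : StrategyProof D f)
    (hb : b ∈ secondsSet D a) (hV : V ∈ D) (hT : T ∈ D) (hTb : peak T = b)
    (h : f (prof2 i V T) = a) : Decides D f i a b := by
  intro V' hV' T' hT' hV'a hT'b
  obtain ⟨U, hU, hUa, hUb⟩ := hb
  have hUT : f (prof2 i U T) = a := hsp.update_eq_of_peak_eq (fun _ => hT) hU hV hUa h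
  have hUT' : f (prof2 i U T') = a := by
    rcases hsp.update_eq_peak_or_second (fun _ => hT') hU hT' hUa hUb
      (hrule.prof2_eq (i := i) hT' hT' hT'b hT'b) with hout | hout
    · exact hout
    · have hba : b = a := (hsp.prof2_eq_of_peak_eq_rev hU hT hT' hTb hout).symm.trans hUT
      exact hout.trans hba
  exact hsp.update_eq_of_peak_eq (fun _ => hT') hV' hU hV'a hUT'

theorem decides_or_decides_rev (hrule : IsRule D f) (hsp : StrategyProof D f)
    (hab : (secondsGraph D).Adj a b) (i : Fin 2) :
    Decides D f i a b ∨ Decides D f i.rev b a := by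
  obtain ⟨-, hb, ha⟩ := hab
  have ⟨V, hV, hVa, hVb⟩ := hb
  have ⟨T, hT, hTb, _⟩ := ha
  rcases hsp.update_eq_peak_or_second (fun _ => hT) hV hT hVa hVb
    (hrule.prof2_eq (i := i) hT hT hTb hTb) with h | h
  · exact .inl (decides_of_prof2_eq hrule hsp hb hV hT hTb h)
  · exact .inr (decides_of_prof2_eq hrule hsp ha hT hV hVa ((prof2_rev i T V).symm ▸ h))

namespace Decides

theorem trans_of_seconds_adj (hsp : StrategyProof D f) (hab : (secondsGraph D).Adj a b)
    (h₁ : Decides D f i a b) (h₂ : Decides D f i b c) : Decides D f i a c := by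
  intro V hV T hT hVa hTc
  obtain ⟨hne, ⟨U, hU, hUa, hUb⟩, W, hW, hWb, -⟩ := hab
  have hUT : f (prof2 i U T) = a := by
    refine (hsp.update_eq_peak_or_second (fun _ => hT) hU hW hUa hUb
      (h₂ W hW T hT hWb hTc)).resolve_right fun hout => hne ?_
    exact (h₁ U hU W hW hUa hWb).symm.trans (hsp.prof2_eq_of_peak_eq_rev hU hW hT hWb hout)
  exact hsp.update_eq_of_peak_eq (fun _ => hT) hV hU hVa hUT

theorem propagate (hrule : IsRule D f) (hsp : StrategyProof D f)
    (hab : (secondsGraph D).Adj a b) (hbc : DomAdjacent D b c) (hac : a ≠ c)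
    (h : Decides D f i a b) : Decides D f i b c := by
  obtain ⟨hne, ⟨U, hU, hUa, -⟩, W, hW, hWb, hWa⟩ := hab
  obtain ⟨R, hR, R', hR', hRb, hRc, hR'c, hR'b, hRR'⟩ := hbc
  have hUR : f (prof2 i U R) = a := h U hU R hR hUa hRb
  have hUR' : f (prof2 i U R') = a := by
    rw [prof2_eq_update_rev] at hUR ⊢
    rw [← hUR]
    exact hsp.update_eq_of_rk_eq (fun _ => hU) hR hR' hRR' (by rwa [hUR, hRb]) (by rwa [hUR, hRc])
  have hWR'_ba : f (prof2 i W R') = b ∨ f (prof2 i W R') = a :=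
    hsp.update_eq_peak_or_second (fun _ => hR') hW hU hWb hWa hUR'
  have hWR'_cb : f (prof2 i W R') = c ∨ f (prof2 i W R') = b := by
    have hWW : f (prof2 i W W) = b := hrule.prof2_eq hW hW hWb hWb
    rw [prof2_eq_update_rev] at hWW ⊢
    exact hsp.update_eq_peak_or_second (fun _ => hW) hR' hW hR'c hR'b hWW
  have hWR' : f (prof2 i W R') = b :=
    hWR'_ba.resolve_right fun ha => hWR'_cb.elim (fun hc => hac (ha.symm.trans hc))
      fun hb => hne (ha.symm.trans hb)
  exact decides_of_prof2_eq hrule hsp ⟨R, hR, hRb, hRc⟩ hW hR' hR'c hWR'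

theorem pairwise_of_isChain (hrule : IsRule D f) (hsp : StrategyProof D f) {l : List α}
    (hl : (b :: l).IsChain (adjGraph D).Adj) (hnd : (b :: l).Nodup)
    (hab : (secondsGraph D).Adj a b) (ha : a ∉ l.head?) (h : Decides D f i a b) :
    (b :: l).Pairwise (Decides D f i) := by
  induction l generalizing a b with
  | nil => exact List.pairwise_singleton _ b
  | cons c l ih =>
    obtain ⟨hbc, hl⟩ := List.isChain_cons_cons.mp hl
    obtain ⟨hb, hnd⟩ := List.nodup_cons.mp hnd
    have hac : a ≠ c := fun e => ha (e ▸ rfl)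
    have hbc' : (secondsGraph D).Adj b c := adjGraph_le_secondsGraph D hbc
    have hdec : Decides D f i b c := h.propagate hrule hsp hab (domAdjacent_of_adj hbc) hac
    have hbl : b ∉ l.head? := fun hmem => hb (.tail c (List.mem_of_mem_head? hmem))
    have hpair : (c :: l).Pairwise (Decides D f i) := ih hl hnd hbc' hbl hdec
    refine List.pairwise_cons.mpr ⟨fun d hd => ?_, hpair⟩
    rcases List.mem_cons.mp hd with rfl | hdl
    · exact hdec
    · exact hdec.trans_of_seconds_adj hsp hbc' (List.rel_of_pairwise_cons hpair hdl)

theorem pairwise_of_isLinkedPath (hrule : IsRule D f) (hsp : StrategyProof D f) {l : List α}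
    (hl : IsLinkedPath D l a b) (h : Decides D f i b a) : l.Pairwise (Decides D f i) := by
  obtain ⟨hchain, hnd, hlen, hhead, hlast, hab⟩ := hl
  match l with
  | a' :: c :: d :: m =>
    obtain rfl : a' = a := Option.some.inj hhead
    have hbm : b ∈ d :: m := by
      rw [List.getLast?_cons_cons, List.getLast?_cons_cons] at hlast
      exact List.mem_of_getLast? hlast
    have hcb : c ≠ b := fun e => (List.nodup_cons.mp hnd.of_cons).1 (e ▸ hbm)
    exact h.pairwise_of_isChain hrule hsp hchain hnd hab.symm fun e => hcb (Option.some.inj e)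

theorem forall_mem_of_isLinkedPath (hrule : IsRule D f) (hsp : StrategyProof D f) {l : List α}
    (hl : IsLinkedPath D l a b) (h : Decides D f i b a) :
    ∀ c ∈ l, ∀ d ∈ l, Decides D f i c d := by
  have hforward : l.Pairwise (Decides D f i) := h.pairwise_of_isLinkedPath hrule hsp hl
  have hab : Decides D f i a b := by
    obtain ⟨m, rfl⟩ := List.head?_eq_some_iff.mp hl.head?_eq
    have hb : b ∈ a :: m := List.mem_of_getLast? hl.getLast?_eq
    exact List.rel_of_pairwise_cons hforward ((List.mem_cons.mp hb).resolve_left hl.adj.ne')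
  have hbackward : l.reverse.Pairwise (Decides D f i) :=
    hab.pairwise_of_isLinkedPath hrule hsp hl.reverse
  exact List.Pairwise.forall_of_forall_of_flip (fun c _ => hrule.decides_self i c) hforward
    (List.pairwise_reverse.mp hbackward)

end Decides

theorem exists_forall_mem_decides (hrule : IsRule D f) (hsp : StrategyProof D f) {l : List α}
    (hl : IsLinkedPath D l a b) : ∃ i, ∀ c ∈ l, ∀ d ∈ l, Decides D f i c d := by
  rcases decides_or_decides_rev hrule hsp hl.adj.symm 0 with h | h
  · exact ⟨_, h.forall_mem_of_isLinkedPath hrule hsp hl⟩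
  · refine ⟨(0 : Fin 2).rev, ?_⟩
    simpa only [List.mem_reverse] using h.forall_mem_of_isLinkedPath hrule hsp hl.reverse

end TwoVoters

theorem stmt15_dictatorship_on_path_general {α : Type*} [Fintype α] [Nonempty α]
    {D : Set (Pref α)} {f : (Fin 2 → Pref α) → α} (hrule : IsRule D f) (hsp : StrategyProof D f)
    {v : ℕ} (hv : 3 ≤ v) {x : Fin v → α} (hpath : IsPathIn (adjGraph D) x)
    (hfirst : x ⟨v - 1, by omega⟩ ∈ secondsSet D (x ⟨0, by omega⟩))
    (hlast : x ⟨0, by omega⟩ ∈ secondsSet D (x ⟨v - 1, by omega⟩)) :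
    DictatorOn D f (Set.range x) := by
  obtain ⟨i, hi⟩ :=
    exists_forall_mem_decides hrule hsp (isLinkedPath_ofFn hpath hv hfirst hlast)
  simp only [List.mem_ofFn'] at hi
  exact dictatorOn_of_decides hi

/-- Lemma 3: a path whose two endpoints can each be the top of a
preference with the other endpoint second-ranked forces a dictatorship on the
path. -/
theorem stmt15_dictatorship_on_path (D : Set (Pref A)) (hD : D.Nonempty)
    (hcard : 3 ≤ Fintype.card A) (hpc : PathConnectedDom D)
    (f : (Fin 2 → Pref A) → A) (hrule : IsRule D f) (hsp : StrategyProof D f)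
    (v : ℕ) (hv : 3 ≤ v) (x : Fin v → A) (hpath : IsPathIn (adjGraph D) x)
    (P Q : Pref A) (hP : P ∈ D) (hQ : Q ∈ D)
    (hP1 : peak P = x ⟨0, by omega⟩) (hP2 : second P = x ⟨v - 1, by omega⟩)
    (hQ1 : peak Q = x ⟨v - 1, by omega⟩) (hQ2 : second Q = x ⟨0, by omega⟩) :
    DictatorOn D f (Set.range x) :=
  stmt15_dictatorship_on_path_general hrule hsp hv hpath ⟨P, hP, hP1, hP2⟩ ⟨Q, hQ, hQ1, hQ2⟩
end
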